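/- Fix p > 3/2 and M > 0. Let f : [0,T]×ℝ³ → [0,∞) with T ≤ 1 be a smooth solution of the homogeneous Landau–Coulomb equation with f(t,·) Schwartz class for each t, such that for every t: f(t) is normalized and ∫ f(t) log f(t) dv ≤ M. For ℓ ≥ 0 write f_ℓ⁺ = (f − ℓ)₊, and define 𝓔_ℓ(T₂,T₃) = sup_{T₂<t<T₃} ∫ (f_ℓ⁺)^p dv + ∫_{T₂}^{T₃}∫ ⟨v⟩^{−3} |∇((f_ℓ⁺)^{p/2})|² dv dt and 𝓐_k(T₁,T₃) = ∫_{T₁}^{T₃}∫ (f_k⁺)^{p+1} dv dt. Then there is C = C(m,p,M) such that for all 0 ≤ T₁ < T₂ ≤ T₃ ≤ T and all 0 < k < ℓ: 𝓔_ℓ(T₂,T₃) ≤ C [ 1/((T₂−T₁)(ℓ−k)) + 1 + ℓ/(ℓ−k) + ℓ²/(ℓ−k)² ] · 𝓐_k(T₁,T₃). -/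

import Mathlib

open MeasureTheory Real Filter Set

noncomputable section

/-- Velocity space ℝ³. -/
abbrev V3 : Type := EuclideanSpace ℝ (Fin 3)

/-- Japanese bracket ⟨v⟩ = (1+|v|²)^{1/2}. -/
def jap (v : V3) : ℝ := Real.sqrt (1 + ‖v‖ ^ 2)

/-- Partial derivative in the i-th coordinate direction. -/
def pd (i : Fin 3) (g : V3 → ℝ) (v : V3) : ℝ :=
  fderiv ℝ g v (EuclideanSpace.single i 1)

/-- Projection matrix Π(z) = Id − z⊗z/|z|². -/
def projPi (z : V3) (i j : Fin 3) : ℝ :=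
  (if i = j then (1 : ℝ) else 0) - z i * z j / ‖z‖ ^ 2

/-- Landau–Coulomb diffusion matrix A[f]. -/
def coeffA (f : V3 → ℝ) (v : V3) (i j : Fin 3) : ℝ :=
  (8 * π)⁻¹ * ∫ w : V3, projPi (v - w) i j / ‖v - w‖ * f w

/-- Newtonian potential a[f] = (−Δ)⁻¹ f. -/
def coeffa (f : V3 → ℝ) (v : V3) : ℝ :=
  (4 * π)⁻¹ * ∫ w : V3, f w / ‖v - w‖

/-- The homogeneous Landau–Coulomb equation
    ∂_t f = ∇·(A[f]∇f − f ∇a[f]), pointwise at (t,v). -/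
def LandauEqAt (f : ℝ → V3 → ℝ) (t : ℝ) (v : V3) : Prop :=
  deriv (fun s => f s v) t =
    ∑ i : Fin 3, pd i
      (fun w => (∑ j : Fin 3, coeffA (f t) w i j * pd j (f t) w)
        - f t w * pd i (coeffa (f t)) w) v

/-- Normalization: unit mass, zero momentum, energy 3. -/
def IsNormalized (f : V3 → ℝ) : Prop :=
  (∫ v : V3, f v) = 1 ∧ (∀ i : Fin 3, (∫ v : V3, f v * v i) = 0) ∧
    (∫ v : V3, f v * ‖v‖ ^ 2) = 3

/-- Schwartz class function. -/
def IsSchwartz (g : V3 → ℝ) : Prop := ∃ h : SchwartzMap V3 ℝ, ⇑h = g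

/-- Distributional (weak) solution of the Landau–Coulomb equation on (0,T). -/
def IsWeakLandauSolution (T : ℝ) (g : ℝ → V3 → ℝ) : Prop :=
  ∀ φ : ℝ × V3 → ℝ, ContDiff ℝ (⊤ : ℕ∞) φ → HasCompactSupport φ →
    (Function.support φ ⊆ Set.Ioo 0 T ×ˢ (Set.univ : Set V3)) →
    (∫ t in Set.Ioo 0 T, ∫ v : V3, φ (t, v) * deriv (fun s => g s v) t) =
      - ∫ t in Set.Ioo 0 T, ∫ v : V3, ∑ i : Fin 3,
          (fderiv ℝ φ (t, v) (0, EuclideanSpace.single i 1)) *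
          ((∑ j : Fin 3, coeffA (g t) v i j * pd j (g t) v)
            - g t v * pd i (coeffa (g t)) v)

/-- Membership in L^r(0,T;L^p(ℝ³)). -/
def MemLrLp (r p T : ℝ) (g : ℝ → V3 → ℝ) : Prop :=
  (∀ᵐ t ∂(volume.restrict (Set.Ioo 0 T)), Integrable (fun v : V3 => |g t v| ^ p)) ∧
  IntegrableOn (fun t => (∫ v : V3, |g t v| ^ p) ^ (r / p)) (Set.Ioo 0 T)

/-- g ∈ W^{1,∞}(Ω) for every Ω compactly contained in (0,T] × ℝ³,
    i.e. g is Lipschitz on every compact subset of (0,T] × ℝ³. -/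
def LocLipschitz (T : ℝ) (g : ℝ → V3 → ℝ) : Prop :=
  ∀ K : Set (ℝ × V3), IsCompact K → K ⊆ Set.Ioc 0 T ×ˢ (Set.univ : Set V3) →
    ∃ L : NNReal, LipschitzOnWith L (fun q : ℝ × V3 => g q.1 q.2) K

/-!
Test the equation against `β'(f) χ²`, where `β` is a `C²` regularisation of the truncated power
`s ↦ (s - l)₊ ^ p` and `χ` is a cutoff with gradient at most `d`. Mass, energy and entropy prevent
`f(t)` from concentrating near a line, which gives `A[f] ≥ c ⟨v⟩⁻³`, so the diffusion produces the
dissipation term. In the drift, `f β''(f) ∇f = ∇Ψ(f)` with `Ψ(s) = s β'(s) - β(s)`, and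
`-Δ a[f] = f` turns it into `∫ f Ψ(f) χ²`. On `{f > l}` one has `f ≤ l / (l - k) (f - k)`, so this
integral is bounded by `(1 + l² / (l - k)²) ∫ (f - k)₊ ^ (p + 1)`. The terms with `∇χ` are absorbed
by Young's inequality up to an error of order `d`. Integrate in time from a moment of `(T₁, T₂)` at
which `∫ (f - k)₊ ^ (p + 1)` is at most its average over `(T₁, T₂)`, use
`(s - l)₊ ^ p ≤ (s - k)₊ ^ (p + 1) / (l - k)` there, and let the regularisation parameter and `d`
tend to `0`, with Fatou's lemma for the left-hand side.
-/

open scoped Convolution LineDeriv SchwartzMap Topology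

/-! ### Convolution of a Schwartz function with a kernel in `L¹ + L^∞` -/

universe u

section L1AddLinfty

variable {V E : Type*} [MeasureSpace V] [NormedAddCommGroup E] [NormedSpace ℝ E]
  {k k' : V → ℝ}

/-- Membership of a real kernel in `L¹ + L^∞`, expressed through a dominating function so that
it passes to smaller kernels. Convolution with such a kernel is defined on bounded integrable
functions. -/
structure IsL1AddLinfty (k : V → ℝ) : Prop where
  aestronglyMeasurable : AEStronglyMeasurable k
  exists_bound : ∃ g : V → ℝ, Integrable g ∧ ∃ B : ℝ, ∀ᵐ z, |k z| ≤ g z + B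

namespace IsL1AddLinfty

lemma mono (hk : IsL1AddLinfty k) (hk' : AEStronglyMeasurable k')
    (hle : ∀ᵐ z, |k' z| ≤ |k z|) : IsL1AddLinfty k' := by
  obtain ⟨g, hg, B, hB⟩ := hk.exists_bound
  exact ⟨hk', g, hg, B, by filter_upwards [hle, hB] with z h₁ h₂ using h₁.trans h₂⟩

lemma integrable_smul (hk : IsL1AddLinfty k) {h : V → E} (hi : Integrable h) {C : ℝ}
    (hC : ∀ v, ‖h v‖ ≤ C) : Integrable fun z => k z • h z := by
  obtain ⟨g, hg, B, hB⟩ := hk.exists_bound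
  refine ((hg.norm.const_mul C).add (hi.norm.const_mul |B|)).mono'
    (hk.aestronglyMeasurable.smul hi.aestronglyMeasurable) ?_
  filter_upwards [hB] with z hz
  calc ‖k z • h z‖ = |k z| * ‖h z‖ := by rw [norm_smul, Real.norm_eq_abs]
    _ ≤ (‖g z‖ + |B|) * ‖h z‖ := by
      gcongr
      exact hz.trans (add_le_add (Real.le_norm_self _) (le_abs_self _))
    _ = ‖h z‖ * ‖g z‖ + |B| * ‖h z‖ := by ring
    _ ≤ C * ‖g z‖ + |B| * ‖h z‖ := by gcongr; exact hC z

variable [AddGroup V] [MeasurableAdd V] [MeasurableNeg V]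
  [(volume : Measure V).IsAddLeftInvariant] [(volume : Measure V).IsNegInvariant]

lemma convolutionExists (hk : IsL1AddLinfty k) {h : V → E} (hi : Integrable h) {C : ℝ}
    (hC : ∀ v, ‖h v‖ ≤ C) :
    ConvolutionExists k h (ContinuousLinearMap.lsmul ℝ ℝ) volume := fun v =>
  hk.integrable_smul (hi.comp_sub_left v) fun z => hC (v - z)

lemma tendsto_convolution (hk : IsL1AddLinfty k) {κ : ℕ → V → ℝ}
    (hκ : ∀ n, AEStronglyMeasurable (κ n)) (hle : ∀ n, ∀ᵐ z, |κ n z| ≤ |k z|)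
    (hlim : ∀ᵐ z, Tendsto (fun n => κ n z) atTop (𝓝 (k z))) {h : V → E} (hi : Integrable h)
    {C : ℝ} (hC : ∀ v, ‖h v‖ ≤ C) (v : V) :
    Tendsto (fun n => (κ n ⋆ h) v) atTop (𝓝 ((k ⋆ h) v)) := by
  refine tendsto_integral_of_dominated_convergence (fun z => ‖k z • h (v - z)‖)
    (fun n => (hκ n).smul (hi.comp_sub_left v).aestronglyMeasurable)
    (hk.convolutionExists hi hC v).norm (fun n => ?_) ?_
  · filter_upwards [hle n] with z hz
    change ‖κ n z • h (v - z)‖ ≤ ‖k z • h (v - z)‖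
    rw [norm_smul, norm_smul]
    gcongr
    exact hz
  · filter_upwards [hlim] with z hz using hz.smul_const _

end IsL1AddLinfty

end L1AddLinfty

section SchwartzConvolution

variable {V : Type*} [NormedAddCommGroup V] [NormedSpace ℝ V]

lemma schwartz_norm_sub_le {E : Type*} [NormedAddCommGroup E] [NormedSpace ℝ E] (h : 𝓢(V, E))
    (n : ℕ) (v : V) :
    ∃ C : ℝ, ∀ x ∈ Metric.ball v 1, ∀ z, ‖h (x - z)‖ ≤ C * (1 + ‖z‖) ^ (-(n : ℝ)) := by
  set S := 2 ^ n * ((Finset.Iic (n, 0)).sup fun m => SchwartzMap.seminorm ℝ m.1 m.2) h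
  have decay (y : V) : (1 + ‖y‖) ^ n * ‖h y‖ ≤ S := by
    simpa using SchwartzMap.one_add_le_sup_seminorm_apply (𝕜 := ℝ) (m := (n, 0)) le_rfl le_rfl h y
  refine ⟨S * (2 + ‖v‖) ^ n, fun x hx z => ?_⟩
  have peetre : 1 + ‖z‖ ≤ (2 + ‖v‖) * (1 + ‖x - z‖) := by
    have hxv : ‖x - v‖ < 1 := by simpa [dist_eq_norm] using hx
    have hz : ‖z‖ ≤ ‖v‖ + ‖x - v‖ + ‖x - z‖ := by
      calc ‖z‖ = ‖v + (x - v) - (x - z)‖ := by congr 1; abel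
        _ ≤ ‖v + (x - v)‖ + ‖x - z‖ := norm_sub_le _ _
        _ ≤ ‖v‖ + ‖x - v‖ + ‖x - z‖ := by gcongr; exact norm_add_le _ _
    nlinarith [norm_nonneg v, norm_nonneg (x - z)]
  rw [Real.rpow_neg (by positivity), Real.rpow_natCast, ← div_eq_mul_inv,
    le_div_iff₀ (by positivity)]
  calc ‖h (x - z)‖ * (1 + ‖z‖) ^ n
      ≤ ‖h (x - z)‖ * ((2 + ‖v‖) * (1 + ‖x - z‖)) ^ n := by gcongr
    _ = ((1 + ‖x - z‖) ^ n * ‖h (x - z)‖) * (2 + ‖v‖) ^ n := by rw [mul_pow]; ring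
    _ ≤ S * (2 + ‖v‖) ^ n := by gcongr; exact decay _

variable [FiniteDimensional ℝ V] [MeasureSpace V] [BorelSpace V]
  [(volume : Measure V).IsAddHaarMeasure] {k : V → ℝ}

lemma integrable_smul_one_add_norm_rpow (hk : IsL1AddLinfty k) :
    Integrable fun z => k z • (1 + ‖z‖) ^ (-((Module.finrank ℝ V + 1 : ℕ) : ℝ)) := by
  refine hk.integrable_smul (C := 1) (integrable_one_add_norm (by push_cast; linarith))
    fun z => ?_
  rw [Real.norm_of_nonneg (by positivity)]
  exact Real.rpow_le_one_of_one_le_of_nonpos (by simp) (neg_nonpos.2 (Nat.cast_nonneg _))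

section Derivative

variable {E : Type*} [NormedAddCommGroup E] [NormedSpace ℝ E]

lemma schwartz_convolutionExists (hk : IsL1AddLinfty k) (h : 𝓢(V, E)) :
    ConvolutionExists k h (ContinuousLinearMap.lsmul ℝ ℝ) volume :=
  hk.convolutionExists h.integrable (h.norm_le_seminorm ℝ)

lemma hasFDerivAt_convolution_schwartz (hk : IsL1AddLinfty k) (h : 𝓢(V, E)) (v : V) :
    HasFDerivAt (k ⋆ h) ((k ⋆ SchwartzMap.fderivCLM ℝ V E h) v) v := by
  obtain ⟨C, hC⟩ := schwartz_norm_sub_le (SchwartzMap.fderivCLM ℝ V E h)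
    (Module.finrank ℝ V + 1) v
  refine hasFDerivAt_integral_of_dominated_of_fderiv_le (s := Metric.ball v 1)
    (bound := fun z => C * ‖k z • (1 + ‖z‖) ^ (-((Module.finrank ℝ V + 1 : ℕ) : ℝ))‖)
    (F' := fun x z => k z • SchwartzMap.fderivCLM ℝ V E h (x - z))
    (Metric.ball_mem_nhds v one_pos)
    (Eventually.of_forall fun x => (schwartz_convolutionExists hk h x).aestronglyMeasurable)
    (schwartz_convolutionExists hk h v)
    (schwartz_convolutionExists hk (SchwartzMap.fderivCLM ℝ V E h) v).aestronglyMeasurable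
    (ae_of_all _ fun z x hx => ?_)
    ((integrable_smul_one_add_norm_rpow hk).norm.const_mul C)
    (ae_of_all _ fun z x _ => ?_)
  · calc ‖k z • SchwartzMap.fderivCLM ℝ V E h (x - z)‖
        = ‖k z‖ * ‖SchwartzMap.fderivCLM ℝ V E h (x - z)‖ := norm_smul _ _
      _ ≤ ‖k z‖ * (C * (1 + ‖z‖) ^ (-((Module.finrank ℝ V + 1 : ℕ) : ℝ))) := by
        gcongr; exact hC x hx z
      _ = C * ‖k z • (1 + ‖z‖) ^ (-((Module.finrank ℝ V + 1 : ℕ) : ℝ))‖ := by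
        rw [norm_smul, Real.norm_of_nonneg (by positivity : 0 ≤ (1 + ‖z‖) ^ (_ : ℝ))]; ring
  · exact ((h.hasFDerivAt (x - z)).comp x ((hasFDerivAt_id x).sub_const z)).const_smul (k z)

lemma fderiv_convolution_schwartz_apply (hk : IsL1AddLinfty k) (h : 𝓢(V, E)) (m v : V) :
    fderiv ℝ (k ⋆ h) v m = (k ⋆ (∂_{m} h : 𝓢(V, E))) v := by
  rw [(hasFDerivAt_convolution_schwartz hk h v).fderiv]
  exact ContinuousLinearMap.integral_apply
    (schwartz_convolutionExists hk (SchwartzMap.fderivCLM ℝ V E h) v) m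

lemma continuous_convolution_schwartz (hk : IsL1AddLinfty k) (h : 𝓢(V, E)) :
    Continuous (k ⋆ h) :=
  continuous_iff_continuousAt.2 fun v => (hasFDerivAt_convolution_schwartz hk h v).continuousAt

end Derivative

lemma convolution_lineDeriv_eq_convolution_fderiv (hk : IsL1AddLinfty k) (hd : Differentiable ℝ k)
    {m : V} (hk' : IsL1AddLinfty fun z => fderiv ℝ k z m) (h : 𝓢(V, ℝ)) (v : V) :
    (k ⋆ (∂_{m} h : 𝓢(V, ℝ))) v = ((fun z => fderiv ℝ k z m) ⋆ h) v := by
  have hder (z : V) : HasFDerivAt (fun z => h (v - z)) (-fderiv ℝ h (v - z)) z := by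
    have := (h.hasFDerivAt (v - z)).comp z ((hasFDerivAt_id z).const_sub v)
    rwa [ContinuousLinearMap.comp_neg, ContinuousLinearMap.comp_id] at this
  have hderm (z : V) : k z * fderiv ℝ (fun z => h (v - z)) z m = -(k z • (∂_{m} h) (v - z)) := by
    rw [(hder z).fderiv, smul_eq_mul, SchwartzMap.lineDerivOp_apply_eq_fderiv]
    simp
  have parts := integral_mul_fderiv_eq_neg_fderiv_mul_of_integrable (μ := (volume : Measure V))
    (f := k) (g := fun z => h (v - z)) (v := m) (schwartz_convolutionExists hk' h v)
    (by simp only [hderm]; exact (schwartz_convolutionExists hk (∂_{m} h) v).neg)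
    (schwartz_convolutionExists hk h v) (fun z _ => hd z) (fun z _ => (hder z).differentiableAt)
  simp only [hderm, integral_neg, neg_inj] at parts
  exact parts

end SchwartzConvolution

lemma contDiff_convolution_schwartz {V : Type u} [NormedAddCommGroup V] [NormedSpace ℝ V]
    [FiniteDimensional ℝ V] [MeasureSpace V] [BorelSpace V]
    [(volume : Measure V).IsAddHaarMeasure] {k : V → ℝ} (hk : IsL1AddLinfty k) (n : ℕ) :
    ∀ {E : Type u} [NormedAddCommGroup E] [NormedSpace ℝ E] (h : 𝓢(V, E)),
      ContDiff ℝ n (k ⋆ h) := by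
  induction n with
  | zero =>
    intro E _ _ h
    exact contDiff_zero.2 (continuous_convolution_schwartz hk h)
  | succ n ih =>
    intro E _ _ h
    rw [Nat.cast_succ, contDiff_succ_iff_hasFDerivAt]
    exact ⟨k ⋆ SchwartzMap.fderivCLM ℝ V E h, ih _, hasFDerivAt_convolution_schwartz hk h⟩

/-! ### Polar coordinates -/

section Polar

variable {V : Type*} [NormedAddCommGroup V] [NormedSpace ℝ V]

lemma integral_Ioi_fderiv_schwartz (h : 𝓢(V, ℝ)) (v : V) {σ : V} (hσ : ‖σ‖ = 1) :
    ∫ r in Ioi (0 : ℝ), fderiv ℝ h (v - r • σ) σ = h v := by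
  have hderiv (r : ℝ) :
      HasDerivAt (fun r : ℝ => -h (v - r • σ)) (fderiv ℝ h (v - r • σ) σ) r := by
    have hline : HasDerivAt (fun r : ℝ => v - r • σ) (-σ) r := by
      simpa using ((hasDerivAt_id r).smul_const σ).const_sub v
    exact ((h.hasFDerivAt _).comp_hasDerivAt r hline).neg.congr_deriv (by rw [map_neg, neg_neg])
  have hint : Integrable fun r : ℝ => fderiv ℝ h (v - r • σ) σ := by
    obtain ⟨C, hC⟩ := schwartz_norm_sub_le (SchwartzMap.fderivCLM ℝ V ℝ h) 2 v
    refine ((integrable_one_add_norm (E := ℝ) (μ := volume) (r := 2) (by simp)).const_mul C).mono'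
      ?_ (ae_of_all _ fun r => ?_)
    · have := (SchwartzMap.fderivCLM ℝ V ℝ h).continuous
      exact (((this.comp (by fun_prop : Continuous fun r : ℝ => v - r • σ)).clm_apply
        continuous_const)).aestronglyMeasurable
    · have hb := hC v (Metric.mem_ball_self one_pos) (r • σ)
      rw [norm_smul, hσ, mul_one] at hb
      refine (ContinuousLinearMap.le_opNorm _ _).trans ?_
      simpa [hσ] using hb
  have hlim : Tendsto (fun r : ℝ => -h (v - r • σ)) atTop (𝓝 0) := by
    obtain ⟨C, hC⟩ := schwartz_norm_sub_le h 1 v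
    have hdecay : Tendsto (fun r : ℝ => C * (1 + ‖r‖)⁻¹) atTop (𝓝 (C * 0)) :=
      (tendsto_inv_atTop_zero.comp
        (tendsto_atTop_add_const_left _ 1 tendsto_norm_atTop_atTop)).const_mul C
    rw [mul_zero] at hdecay
    refine squeeze_zero_norm (fun r => ?_) hdecay
    have hb := hC v (Metric.mem_ball_self one_pos) (r • σ)
    rw [norm_smul, hσ, mul_one, Nat.cast_one, Real.rpow_neg_one] at hb
    rwa [norm_neg]
  rw [integral_Ioi_of_hasDerivAt_of_tendsto' (fun r _ => hderiv r) hint.integrableOn hlim]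
  simp

variable [FiniteDimensional ℝ V] [Nontrivial V] [MeasurableSpace V] [BorelSpace V]
  (μ : Measure V) [μ.IsAddHaarMeasure]

lemma integral_eq_integral_toSphere_Ioi {F : V → ℝ} (hF : Integrable F μ) :
    ∫ z, F z ∂μ = ∫ σ : Metric.sphere (0 : V) 1, (∫ r in Ioi (0 : ℝ),
      r ^ (Module.finrank ℝ V - 1) * F (r • (σ : V))) ∂μ.toSphere := by
  set n := Module.finrank ℝ V - 1
  set P : Metric.sphere (0 : V) 1 × Ioi (0 : ℝ) → ℝ := fun x => F (x.2.1 • x.1.1)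
  have hcomp : P ∘ homeomorphUnitSphereProd V = F ∘ Subtype.val := by
    funext x
    have hx : ‖(x : V)‖ ≠ 0 := norm_ne_zero_iff.2 x.2
    simp [P, smul_smul, hx]
  have hmp := μ.measurePreserving_homeomorphUnitSphereProd
  have hemb := (homeomorphUnitSphereProd V).measurableEmbedding
  have hP : Integrable P (μ.toSphere.prod (.volumeIoiPow n)) := by
    rw [← hmp.integrable_comp_emb hemb, hcomp,
      ← integrableOn_iff_comap_subtypeVal (measurableSet_singleton _).compl]
    exact hF.integrableOn
  calc ∫ z, F z ∂μ = ∫ x, (F ∘ Subtype.val) x ∂(μ.comap (Subtype.val : ({0}ᶜ : Set V) → V)) := by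
        simp only [Function.comp_apply]
        rw [integral_subtype_comap (measurableSet_singleton _).compl F, restrict_compl_singleton]
    _ = ∫ x, P x ∂(μ.toSphere.prod (.volumeIoiPow n)) := by
        rw [← hcomp, ← hmp.integral_comp hemb]; rfl
    _ = ∫ σ, (∫ r, P (σ, r) ∂(.volumeIoiPow n)) ∂μ.toSphere := integral_prod _ hP
    _ = _ := by
        refine integral_congr_ae (ae_of_all _ fun σ => ?_)
        simp only [Measure.volumeIoiPow, ENNReal.ofReal, P]
        rw [integral_withDensity_eq_integral_smul
            ((measurable_subtype_coe.pow_const _).real_toNNReal),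
          integral_subtype_comap measurableSet_Ioi
            fun r : ℝ => Real.toNNReal (r ^ n) • F (r • (σ : V))]
        refine setIntegral_congr_fun measurableSet_Ioi fun r (hr : 0 < r) => ?_
        simp only [NNReal.smul_def, Real.coe_toNNReal _ (pow_nonneg hr.le n), smul_eq_mul]

lemma integral_norm_inv_pow_mul_fderiv_schwartz (h : 𝓢(V, ℝ)) (v : V)
    (hint : Integrable (fun z => ‖z‖⁻¹ ^ Module.finrank ℝ V * fderiv ℝ h (v - z) z) μ) :
    ∫ z, ‖z‖⁻¹ ^ Module.finrank ℝ V * fderiv ℝ h (v - z) z ∂μ =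
      Module.finrank ℝ V * μ.real (Metric.ball 0 1) * h v := by
  have hray (σ : Metric.sphere (0 : V) 1) : ∫ r in Ioi (0 : ℝ), r ^ (Module.finrank ℝ V - 1) *
      (‖r • (σ : V)‖⁻¹ ^ Module.finrank ℝ V * fderiv ℝ h (v - r • (σ : V)) (r • (σ : V))) =
        h v := by
    have hσ : ‖(σ : V)‖ = 1 := norm_eq_of_mem_sphere σ
    rw [← integral_Ioi_fderiv_schwartz h v hσ]
    refine setIntegral_congr_fun measurableSet_Ioi fun r (hr : 0 < r) => ?_
    obtain ⟨n, hn⟩ : ∃ n, Module.finrank ℝ V = n + 1 :=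
      Nat.exists_eq_succ_of_ne_zero Module.finrank_pos.ne'
    simp only [norm_smul, hσ, Real.norm_of_nonneg hr.le, map_smul, smul_eq_mul, hn,
      Nat.add_sub_cancel, mul_one, inv_pow]
    field_simp
    ring
  rw [integral_eq_integral_toSphere_Ioi μ hint]
  simp only [hray]
  rw [integral_const, μ.toSphere_real_apply_univ, smul_eq_mul]

end Polar

/-! ### Partial derivatives -/

lemma continuous_pd {g : V3 → ℝ} (hg : ContDiff ℝ 1 g) (i : Fin 3) : Continuous (pd i g) :=
  (hg.continuous_fderiv one_ne_zero).clm_apply continuous_const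

lemma hasCompactSupport_pd {g : V3 → ℝ} (hg : HasCompactSupport g) (i : Fin 3) :
    HasCompactSupport (pd i g) :=
  hg.fderiv_apply ℝ (EuclideanSpace.single i 1)

lemma fderiv_apply_eq_sum_pd (g : V3 → ℝ) (v z : V3) : fderiv ℝ g v z = ∑ i, z i * pd i g v := by
  have hz : z = ∑ i, z i • EuclideanSpace.single i (1 : ℝ) := by
    ext j; simp [Finset.sum_apply, Pi.single_apply]
  conv_lhs => rw [hz]
  simp [pd]

lemma integral_mul_pd {ψ F : V3 → ℝ} (hψ : ContDiff ℝ 1 ψ) (hc : HasCompactSupport ψ)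
    (hF : ContDiff ℝ 1 F) (i : Fin 3) : ∫ v, ψ v * pd i F v = -∫ v, pd i ψ v * F v :=
  integral_mul_fderiv_eq_neg_fderiv_mul_of_integrable
    (((continuous_pd hψ i).mul hF.continuous).integrable_of_hasCompactSupport
      (hasCompactSupport_pd hc i).mul_right)
    ((hψ.continuous.mul (continuous_pd hF i)).integrable_of_hasCompactSupport hc.mul_right)
    ((hψ.continuous.mul hF.continuous).integrable_of_hasCompactSupport hc.mul_right)
    (fun v _ => hψ.differentiable one_ne_zero v) (fun v _ => hF.differentiable one_ne_zero v)

lemma integral_mul_sum_pd {ψ : V3 → ℝ} {F : Fin 3 → V3 → ℝ} (hψ : ContDiff ℝ 1 ψ)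
    (hc : HasCompactSupport ψ) (hF : ∀ i, ContDiff ℝ 1 (F i)) :
    ∫ v, ψ v * ∑ i, pd i (F i) v = -∫ v, ∑ i, pd i ψ v * F i v := by
  have hψF (i : Fin 3) : Integrable fun v => ψ v * pd i (F i) v :=
    (hψ.continuous.mul (continuous_pd (hF i) i)).integrable_of_hasCompactSupport hc.mul_right
  have hFψ (i : Fin 3) : Integrable fun v => pd i ψ v * F i v :=
    ((continuous_pd hψ i).mul (hF i).continuous).integrable_of_hasCompactSupport
      (hasCompactSupport_pd hc i).mul_right
  simp only [Finset.mul_sum]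
  rw [integral_finsetSum _ fun i _ => hψF i, integral_finsetSum _ fun i _ => hFψ i,
    ← Finset.sum_neg_distrib]
  exact Finset.sum_congr rfl fun i _ => integral_mul_pd hψ hc (hF i) i

/-! ### Coulomb kernels -/

/-- The kernel `|z|⁻¹ + |z|⁻²`, a common majorant of the Newtonian kernel, of its gradient and of
the Landau kernel. -/
def coulombBound (z : V3) : ℝ := ‖z‖⁻¹ + ‖z‖⁻¹ ^ 2

/-- The singular, integrable part of `coulombBound`. -/
def coulombBoundNear : V3 → ℝ := (Metric.ball 0 1).indicator coulombBound

lemma coulombBound_nonneg (z : V3) : 0 ≤ coulombBound z := by unfold coulombBound; positivity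

lemma measurable_coulombBound : Measurable coulombBound := by unfold coulombBound; fun_prop

lemma coulombBoundNear_nonneg (z : V3) : 0 ≤ coulombBoundNear z :=
  indicator_nonneg (fun z _ => coulombBound_nonneg z) z

lemma integrable_coulombBoundNear : Integrable coulombBoundNear := by
  refine (integrable_indicator_iff measurableSet_ball).2
    ((integrableOn_fun_norm_addHaar (E := V3) volume (f := fun r : ℝ => r⁻¹ + r⁻¹ ^ 2)).2 ?_)
  have hint : IntegrableOn (fun r : ℝ => r + 1) (Ioo 0 1) :=
    (Continuous.integrableOn_Icc (by fun_prop)).mono_set Ioo_subset_Icc_self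
  refine hint.congr_fun (fun r hr => ?_) measurableSet_Ioo
  have hr0 : r ≠ 0 := hr.1.ne'
  simp only [finrank_euclideanSpace_fin, Nat.add_one_sub_one, smul_eq_mul]
  field_simp

lemma coulombBound_le_near_add_two (z : V3) : coulombBound z ≤ coulombBoundNear z + 2 := by
  by_cases hz : z ∈ Metric.ball (0 : V3) 1
  · simp [coulombBoundNear, hz]
  · have hinv : ‖z‖⁻¹ ≤ 1 := inv_le_one_of_one_le₀ (by simpa using hz)
    have hinv0 : 0 ≤ ‖z‖⁻¹ := by positivity
    simp only [coulombBoundNear, hz, not_false_eq_true, indicator_of_notMem, zero_add]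
    unfold coulombBound
    nlinarith

lemma isL1AddLinfty_of_abs_le_coulombBound {k : V3 → ℝ} (hk : Measurable k)
    (hle : ∀ z, |k z| ≤ coulombBound z) : IsL1AddLinfty k :=
  ⟨hk.aestronglyMeasurable, coulombBoundNear, integrable_coulombBoundNear, 2,
    ae_of_all _ fun z => (hle z).trans (coulombBound_le_near_add_two z)⟩

lemma isL1AddLinfty_coulombBound : IsL1AddLinfty coulombBound :=
  isL1AddLinfty_of_abs_le_coulombBound measurable_coulombBound fun z =>
    (abs_of_nonneg (coulombBound_nonneg z)).le

/-- The Newtonian kernel without its factor `(4π)⁻¹`. -/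
def newtonKernel (z : V3) : ℝ := ‖z‖⁻¹

/-- The components `zᵢ |z|⁻³` of the Coulomb field, that is of minus the gradient of
`newtonKernel`. -/
def newtonFieldKernel (i : Fin 3) (z : V3) : ℝ := z i * ‖z‖⁻¹ ^ 3

/-- The entries `Π(z)ᵢⱼ / |z|` of the Landau kernel, without the factor `(8π)⁻¹`. -/
def landauKernel (i j : Fin 3) (z : V3) : ℝ := projPi z i j / ‖z‖

lemma abs_apply_le_norm (z : V3) (i : Fin 3) : |z i| ≤ ‖z‖ := PiLp.norm_apply_le z i

lemma abs_newtonKernel_le (z : V3) : |newtonKernel z| ≤ coulombBound z := by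
  unfold newtonKernel coulombBound
  rw [abs_of_nonneg (by positivity)]
  exact le_add_of_nonneg_right (by positivity)

lemma abs_newtonFieldKernel_le (i : Fin 3) (z : V3) :
    |newtonFieldKernel i z| ≤ coulombBound z := by
  unfold newtonFieldKernel coulombBound
  rw [abs_mul, abs_of_nonneg (a := ‖z‖⁻¹ ^ 3) (by positivity)]
  rcases eq_or_ne z 0 with rfl | hz
  · simp
  have hz' : ‖z‖ ≠ 0 := norm_ne_zero_iff.2 hz
  calc |z i| * ‖z‖⁻¹ ^ 3 ≤ ‖z‖ * ‖z‖⁻¹ ^ 3 := by gcongr; exact abs_apply_le_norm z i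
    _ = ‖z‖⁻¹ ^ 2 := by field_simp
    _ ≤ ‖z‖⁻¹ + ‖z‖⁻¹ ^ 2 := le_add_of_nonneg_left (by positivity)

lemma abs_projPi_le_one (z : V3) (i j : Fin 3) : |projPi z i j| ≤ 1 := by
  unfold projPi
  have hprod : |z i * z j / ‖z‖ ^ 2| ≤ 1 := by
    rw [abs_div, abs_mul, abs_of_nonneg (a := ‖z‖ ^ 2) (by positivity), sq]
    exact div_le_one_of_le₀ (by gcongr <;> exact abs_apply_le_norm _ _) (by positivity)
  split_ifs with hij
  · subst hij
    have hnonneg : 0 ≤ z i * z i / ‖z‖ ^ 2 := div_nonneg (mul_self_nonneg _) (by positivity)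
    rw [abs_le] at hprod ⊢
    constructor <;> linarith
  · rwa [zero_sub, abs_neg]

lemma abs_landauKernel_le (i j : Fin 3) (z : V3) : |landauKernel i j z| ≤ coulombBound z := by
  refine le_trans ?_ (abs_newtonKernel_le z)
  unfold landauKernel newtonKernel
  rw [abs_div, div_eq_mul_inv, abs_inv]
  exact mul_le_of_le_one_left (by positivity) (abs_projPi_le_one z i j)

lemma isL1AddLinfty_newtonKernel : IsL1AddLinfty newtonKernel :=
  isL1AddLinfty_of_abs_le_coulombBound (by unfold newtonKernel; fun_prop) abs_newtonKernel_le

lemma isL1AddLinfty_newtonFieldKernel (i : Fin 3) : IsL1AddLinfty (newtonFieldKernel i) :=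
  isL1AddLinfty_of_abs_le_coulombBound (by unfold newtonFieldKernel; fun_prop)
    (abs_newtonFieldKernel_le i)

lemma isL1AddLinfty_landauKernel (i j : Fin 3) : IsL1AddLinfty (landauKernel i j) :=
  isL1AddLinfty_of_abs_le_coulombBound (by unfold landauKernel projPi; fun_prop)
    (abs_landauKernel_le i j)

/-- The smooth regularisation `(|z|² + ε)^{-1/2}` of `newtonKernel`. -/
def regNewtonKernel (ε : ℝ) (z : V3) : ℝ := (√(‖z‖ ^ 2 + ε))⁻¹

section Regularisation

variable {ε : ℝ}

lemma regNewtonKernel_nonneg (ε : ℝ) (z : V3) : 0 ≤ regNewtonKernel ε z := by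
  unfold regNewtonKernel; positivity

lemma measurable_regNewtonKernel (ε : ℝ) : Measurable (regNewtonKernel ε) := by
  unfold regNewtonKernel; fun_prop

lemma regNewtonKernel_le (hε : 0 ≤ ε) {z : V3} (hz : z ≠ 0) :
    regNewtonKernel ε z ≤ newtonKernel z := by
  have := norm_pos_iff.2 hz
  unfold regNewtonKernel newtonKernel
  gcongr
  exact Real.le_sqrt_of_sq_le (by linarith)

lemma tendsto_regNewtonKernel {z : V3} (hz : z ≠ 0) :
    Tendsto (fun n : ℕ => regNewtonKernel (1 / (n + 1)) z) atTop (𝓝 (newtonKernel z)) := by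
  have hlim : Tendsto (fun n : ℕ => √(‖z‖ ^ 2 + 1 / ((n : ℝ) + 1))) atTop (𝓝 √(‖z‖ ^ 2 + 0)) :=
    (Real.continuous_sqrt.tendsto _).comp
      (tendsto_const_nhds.add tendsto_one_div_add_atTop_nhds_zero_nat)
  rw [add_zero, Real.sqrt_sq (norm_nonneg z)] at hlim
  exact hlim.inv₀ (norm_ne_zero_iff.2 hz)

lemma hasFDerivAt_regNewtonKernel (hε : 0 < ε) (z : V3) :
    HasFDerivAt (regNewtonKernel ε) (-(regNewtonKernel ε z ^ 3) • innerSL ℝ z) z := by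
  have hpos : 0 < ‖z‖ ^ 2 + ε := by positivity
  have hsqrt : √(‖z‖ ^ 2 + ε) ≠ 0 := (Real.sqrt_pos.2 hpos).ne'
  have houter : HasDerivAt (fun x : ℝ => (√(x + ε))⁻¹)
      (-(1 / (2 * √(‖z‖ ^ 2 + ε))) / √(‖z‖ ^ 2 + ε) ^ 2) (‖z‖ ^ 2) :=
    (((hasDerivAt_id (‖z‖ ^ 2)).add_const ε).sqrt hpos.ne').inv hsqrt
  refine (houter.comp_hasFDerivAt z (hasStrictFDerivAt_norm_sq z).hasFDerivAt).congr_fderiv ?_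
  ext y
  simp only [regNewtonKernel, smul_apply, innerSL_apply_apply, smul_eq_mul,
    nsmul_eq_mul]
  push_cast
  field_simp

lemma fderiv_regNewtonKernel_single (hε : 0 < ε) (i : Fin 3) (z : V3) :
    fderiv ℝ (regNewtonKernel ε) z (EuclideanSpace.single i 1) =
      -(z i * regNewtonKernel ε z ^ 3) := by
  rw [(hasFDerivAt_regNewtonKernel hε z).fderiv]
  simp [EuclideanSpace.inner_single_right, mul_comm]

lemma abs_regNewtonKernel_le (hε : 0 ≤ ε) : ∀ᵐ z, |regNewtonKernel ε z| ≤ |newtonKernel z| := by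
  filter_upwards [Measure.ae_ne volume (0 : V3)] with z hz
  rw [abs_of_nonneg (regNewtonKernel_nonneg ε z)]
  exact (regNewtonKernel_le hε hz).trans (le_abs_self _)

lemma abs_fderiv_regNewtonKernel_le (hε : 0 ≤ ε) (i : Fin 3) :
    ∀ᵐ z : V3, |z i * regNewtonKernel ε z ^ 3| ≤ |newtonFieldKernel i z| := by
  filter_upwards [Measure.ae_ne volume (0 : V3)] with z hz
  unfold newtonFieldKernel
  rw [abs_mul, abs_mul, abs_pow, abs_pow, abs_of_nonneg (regNewtonKernel_nonneg ε z),
    abs_of_nonneg (a := ‖z‖⁻¹) (by positivity)]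
  gcongr
  exacts [regNewtonKernel_nonneg ε z, regNewtonKernel_le hε hz]

end Regularisation

/-! ### The Landau coefficients as convolutions -/

lemma newtonKernel_convolution_lineDeriv (h : 𝓢(V3, ℝ)) (i : Fin 3) (v : V3) :
    (newtonKernel ⋆ (∂_{EuclideanSpace.single i (1 : ℝ)} h : 𝓢(V3, ℝ))) v =
      -(newtonFieldKernel i ⋆ h) v := by
  set ε : ℕ → ℝ := fun n => 1 / (n + 1)
  have hε (n : ℕ) : 0 < ε n := Nat.one_div_pos_of_nat
  set κ : ℕ → V3 → ℝ := fun n z => z i * regNewtonKernel (ε n) z ^ 3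
  have hκm (n : ℕ) : Measurable (κ n) := by
    have := measurable_regNewtonKernel (ε n)
    fun_prop
  have hκ (n : ℕ) := abs_fderiv_regNewtonKernel_le (hε n).le i
  have hreg (n : ℕ) := abs_regNewtonKernel_le (hε n).le
  have parts (n : ℕ) : (regNewtonKernel (ε n) ⋆
      (∂_{EuclideanSpace.single i (1 : ℝ)} h : 𝓢(V3, ℝ))) v = -(κ n ⋆ h) v := by
    have hd : (fun z => fderiv ℝ (regNewtonKernel (ε n)) z (EuclideanSpace.single i 1)) = -κ n :=
      funext (fderiv_regNewtonKernel_single (hε n) i)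
    rw [convolution_lineDeriv_eq_convolution_fderiv
      (isL1AddLinfty_newtonKernel.mono (measurable_regNewtonKernel _).aestronglyMeasurable (hreg n))
      fun z => (hasFDerivAt_regNewtonKernel (hε n) z).differentiableAt, hd]
    · simp [convolution, integral_neg]
    · rw [hd]
      exact (isL1AddLinfty_newtonFieldKernel i).mono (hκm n).neg.aestronglyMeasurable
        (by simpa only [Pi.neg_apply, abs_neg] using hκ n)
  refine tendsto_nhds_unique ?_ ((isL1AddLinfty_newtonFieldKernel i).tendsto_convolution
    (fun n => (hκm n).aestronglyMeasurable) hκ ?_ h.integrable (h.norm_le_seminorm ℝ) v).neg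
  · simp only [← parts]
    refine isL1AddLinfty_newtonKernel.tendsto_convolution
      (fun n => (measurable_regNewtonKernel _).aestronglyMeasurable) hreg ?_
      (SchwartzMap.integrable _) (SchwartzMap.norm_le_seminorm ℝ _) v
    filter_upwards [Measure.ae_ne volume 0] with z hz using tendsto_regNewtonKernel hz
  · filter_upwards [Measure.ae_ne volume 0] with z hz
    exact ((tendsto_regNewtonKernel hz).pow 3).const_mul _

lemma coeffa_eq_convolution (g : V3 → ℝ) :
    coeffa g = fun v => (4 * π)⁻¹ * (newtonKernel ⋆ g) v := by
  funext v
  rw [convolution_lsmul_swap]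
  simp only [coeffa, newtonKernel, smul_eq_mul, div_eq_inv_mul]

lemma coeffA_eq_convolution (g : V3 → ℝ) (v : V3) (i j : Fin 3) :
    coeffA g v i j = (8 * π)⁻¹ * (landauKernel i j ⋆ g) v := by
  rw [convolution_lsmul_swap]
  rfl

lemma coeffA_symm (g : V3 → ℝ) (v : V3) (i j : Fin 3) : coeffA g v i j = coeffA g v j i := by
  have hsymm (z : V3) : projPi z i j = projPi z j i := by
    simp only [projPi, eq_comm (a := i), mul_comm (z i)]
  simp only [coeffA, hsymm]

section Schwartz

variable (h : 𝓢(V3, ℝ))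

lemma contDiff_coeffA (i j : Fin 3) : ContDiff ℝ 1 fun v => coeffA h v i j := by
  simp only [coeffA_eq_convolution]
  exact contDiff_const.mul
    (by exact_mod_cast contDiff_convolution_schwartz (isL1AddLinfty_landauKernel i j) 1 h)

lemma pd_coeffa (i : Fin 3) :
    pd i (coeffa h) = fun v => -(4 * π)⁻¹ * (newtonFieldKernel i ⋆ h) v := by
  funext v
  have hdiff := (hasFDerivAt_convolution_schwartz isL1AddLinfty_newtonKernel h v).differentiableAt
  rw [coeffa_eq_convolution, pd, fderiv_const_mul hdiff, smul_apply,
    fderiv_convolution_schwartz_apply isL1AddLinfty_newtonKernel,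
    newtonKernel_convolution_lineDeriv, smul_eq_mul]
  ring

lemma contDiff_pd_coeffa (i : Fin 3) : ContDiff ℝ 1 (pd i (coeffa h)) := by
  rw [pd_coeffa]
  exact contDiff_const.mul
    (by exact_mod_cast contDiff_convolution_schwartz (isL1AddLinfty_newtonFieldKernel i) 1 h)

lemma volume_real_unit_ball : (volume : Measure V3).real (Metric.ball 0 1) = 4 * π / 3 := by
  rw [measureReal_def, EuclideanSpace.volume_ball_fin_three, ENNReal.toReal_mul,
    ENNReal.toReal_ofReal (by positivity)]
  simp [mul_comm]

lemma sum_newtonFieldKernel_convolution_lineDeriv (v : V3) :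
    ∑ i, (newtonFieldKernel i ⋆ (∂_{EuclideanSpace.single i (1 : ℝ)} h : 𝓢(V3, ℝ))) v =
      4 * π * h v := by
  have hint (i : Fin 3) : Integrable fun z =>
      newtonFieldKernel i z • (∂_{EuclideanSpace.single i (1 : ℝ)} h : 𝓢(V3, ℝ)) (v - z) :=
    schwartz_convolutionExists (isL1AddLinfty_newtonFieldKernel i) _ v
  have hdiv (z : V3) : ∑ i, newtonFieldKernel i z •
      (∂_{EuclideanSpace.single i (1 : ℝ)} h : 𝓢(V3, ℝ)) (v - z) =
        ‖z‖⁻¹ ^ Module.finrank ℝ V3 * fderiv ℝ h (v - z) z := by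
    rw [fderiv_apply_eq_sum_pd, finrank_euclideanSpace_fin, Finset.mul_sum]
    refine Finset.sum_congr rfl fun i _ => ?_
    rw [SchwartzMap.lineDerivOp_apply_eq_fderiv, newtonFieldKernel, pd, smul_eq_mul]
    ring
  have hsum := integrable_finsetSum Finset.univ fun i _ => hint i
  simp only [hdiv] at hsum
  calc ∑ i, (newtonFieldKernel i ⋆ (∂_{EuclideanSpace.single i (1 : ℝ)} h : 𝓢(V3, ℝ))) v
      = ∫ z, ‖z‖⁻¹ ^ Module.finrank ℝ V3 * fderiv ℝ h (v - z) z := by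
        simp only [← hdiv]
        exact (integral_finsetSum _ fun i _ => hint i).symm
    _ = 4 * π * h v := by
        rw [integral_norm_inv_pow_mul_fderiv_schwartz volume h v hsum, volume_real_unit_ball,
          finrank_euclideanSpace_fin]
        push_cast
        ring

lemma neg_laplacian_coeffa (v : V3) : -∑ i, pd i (pd i (coeffa h)) v = h v := by
  have hpd (i : Fin 3) : pd i (pd i (coeffa h)) v = -(4 * π)⁻¹ *
      (newtonFieldKernel i ⋆ (∂_{EuclideanSpace.single i (1 : ℝ)} h : 𝓢(V3, ℝ))) v := by
    have hk := isL1AddLinfty_newtonFieldKernel i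
    rw [pd_coeffa, pd, fderiv_const_mul (hasFDerivAt_convolution_schwartz hk h v).differentiableAt,
      smul_apply, fderiv_convolution_schwartz_apply hk, smul_eq_mul]
  simp only [hpd]
  rw [← Finset.mul_sum, sum_newtonFieldKernel_convolution_lineDeriv]
  field_simp

lemma integral_sum_pd_coeffa_mul_pd {Ψ : V3 → ℝ} (hΨ : ContDiff ℝ 1 Ψ)
    (hc : HasCompactSupport Ψ) :
    ∫ v, ∑ i, pd i (coeffa h) v * pd i Ψ v = ∫ v, h v * Ψ v := by
  have parts := integral_mul_sum_pd hΨ hc fun i => contDiff_pd_coeffa h i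
  simp only [mul_comm (pd _ Ψ _)] at parts
  rw [eq_neg_iff_add_eq_zero, add_comm, ← eq_neg_iff_add_eq_zero] at parts
  rw [parts, ← integral_neg]
  congr 1 with v
  rw [← neg_laplacian_coeffa h v]
  ring

end Schwartz

/-! ### Coercivity of the diffusion matrix -/

section InnerProductSpace

variable {F : Type*} [NormedAddCommGroup F] [InnerProductSpace ℝ F]

/-- The quadratic form `ξᵀ Π(z) ξ / |z|` of the Landau kernel. -/
def landauQuadForm (ξ z : F) : ℝ :=
  (‖ξ‖ ^ 2 - inner ℝ z ξ ^ 2 / ‖z‖ ^ 2) * ‖z‖⁻¹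

lemma landauQuadForm_nonneg (ξ z : F) : 0 ≤ landauQuadForm ξ z := by
  refine mul_nonneg (sub_nonneg.2 (div_le_of_le_mul₀ (by positivity) (by positivity) ?_))
    (by positivity)
  rw [← sq_abs, ← mul_pow, mul_comm ‖ξ‖]
  gcongr
  exact abs_real_inner_le_norm z ξ

-- Cauchy–Schwarz for `n` against the component of `z` orthogonal to `ξ`.
lemma sq_norm_mul_sq_inner_le_gram {n ξ z : F} (hn : ‖n‖ = 1) (hnξ : inner ℝ n ξ = 0) :
    ‖ξ‖ ^ 2 * inner ℝ n z ^ 2 ≤ ‖z‖ ^ 2 * ‖ξ‖ ^ 2 - inner ℝ z ξ ^ 2 := by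
  rcases eq_or_ne ξ 0 with rfl | hξ
  · simp
  set y := ‖ξ‖ ^ 2 • z - inner ℝ z ξ • ξ with hy
  have inner_y : inner ℝ n y = ‖ξ‖ ^ 2 * inner ℝ n z := by
    simp [hy, inner_sub_right, inner_smul_right, hnξ]
  have norm_y : ‖y‖ ^ 2 = ‖ξ‖ ^ 2 * (‖z‖ ^ 2 * ‖ξ‖ ^ 2 - inner ℝ z ξ ^ 2) := by
    rw [hy, norm_sub_sq_real, norm_smul, norm_smul, real_inner_smul_left, inner_smul_right]
    simp only [Real.norm_eq_abs, mul_pow, sq_abs, abs_norm, abs_pow]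
    ring
  have cauchy_schwarz : inner ℝ n y ^ 2 ≤ ‖y‖ ^ 2 := by
    rw [← sq_abs]
    gcongr
    simpa [hn] using abs_real_inner_le_norm n y
  rw [inner_y, norm_y, mul_pow, sq (‖ξ‖ ^ 2), mul_assoc] at cauchy_schwarz
  exact le_of_mul_le_mul_left cauchy_schwarz (by positivity)

lemma le_landauQuadForm {n ξ z : F} (hn : ‖n‖ = 1) (hnξ : inner ℝ n ξ = 0) (hz : z ≠ 0) :
    ‖ξ‖ ^ 2 * inner ℝ n z ^ 2 * ‖z‖⁻¹ ^ 3 ≤ landauQuadForm ξ z := by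
  have hz' : ‖z‖ ≠ 0 := norm_ne_zero_iff.2 hz
  have factor : landauQuadForm ξ z =
      (‖z‖ ^ 2 * ‖ξ‖ ^ 2 - inner ℝ z ξ ^ 2) * ‖z‖⁻¹ ^ 3 := by
    rw [landauQuadForm]
    field_simp
  rw [factor]
  gcongr
  exact sq_norm_mul_sq_inner_le_gram hn hnξ

lemma exists_norm_eq_one_inner_eq_zero [FiniteDimensional ℝ F] (hF : 1 < Module.finrank ℝ F)
    (ξ : F) : ∃ n : F, ‖n‖ = 1 ∧ inner ℝ n ξ = 0 := by
  have orthogonal_ne_bot : (ℝ ∙ ξ)ᗮ ≠ ⊥ := fun h => by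
    have finrank_add := (ℝ ∙ ξ).finrank_add_finrank_orthogonal
    rw [h, finrank_bot] at finrank_add
    have finrank_le : Module.finrank ℝ (ℝ ∙ ξ) ≤ 1 := by
      simpa using finrank_span_le_card (R := ℝ) {ξ}
    omega
  obtain ⟨n, hn, hn0⟩ := Submodule.exists_mem_ne_zero_of_ne_bot orthogonal_ne_bot
  refine ⟨‖n‖⁻¹ • n, by simpa using norm_smul_inv_norm (𝕜 := ℝ) hn0, ?_⟩
  rw [real_inner_smul_left, Submodule.mem_orthogonal_singleton_iff_inner_left.1 hn, mul_zero]

lemma pairwiseDisjoint_translates_slab {n : F} (hn : ‖n‖ = 1) (c : ℝ) (m : ℕ) :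
    (Set.univ : Set ℕ).PairwiseDisjoint fun k : ℕ => (fun w => w + (-(k / m : ℝ)) • n) ⁻¹'
      {w : F | |inner ℝ n w - c| < 1 / (2 * m)} := by
  intro a _ b _ hab
  rw [Function.onFun, Set.disjoint_left]
  intro w ha hb
  simp only [mem_preimage, mem_ofPred_eq, inner_add_right, inner_smul_right,
    real_inner_self_eq_norm_sq, hn, one_pow, mul_one] at ha hb
  have hm : (0 : ℝ) < m := by
    have := (abs_nonneg _).trans_lt ha
    simpa using this
  have dist_lt : |(a : ℝ) / m - b / m| < 1 / m := by
    rw [abs_lt] at ha hb ⊢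
    have half : (1 : ℝ) / m = 1 / (2 * m) + 1 / (2 * m) := by field_simp; norm_num
    constructor <;> linarith
  rw [← sub_div, abs_div, abs_of_pos hm, div_lt_div_iff_of_pos_right hm] at dist_lt
  have : |(a : ℤ) - b| < 1 := by exact_mod_cast dist_lt
  rw [Int.abs_lt_one_iff] at this
  omega

variable [MeasurableSpace F] [BorelSpace F]

lemma measurableSet_abs_inner_sub_lt (n : F) (c η : ℝ) :
    MeasurableSet {w : F | |inner ℝ n w - c| < η} :=
  (isOpen_lt (by fun_prop) continuous_const).measurableSet

-- `m` disjoint translates of the slab, by multiples of `n / m`, fit into the larger ball.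
lemma natCast_mul_measure_ball_inter_slab_le (μ : Measure F) [μ.IsAddRightInvariant]
    {n : F} (hn : ‖n‖ = 1) (c R : ℝ) (m : ℕ) :
    m * μ (Metric.ball 0 R ∩ {w | |inner ℝ n w - c| < 1 / (2 * m)}) ≤
      μ (Metric.ball 0 (R + 1)) := by
  set E := Metric.ball (0 : F) R ∩ {w | |inner ℝ n w - c| < 1 / (2 * m)}
  have hEm : MeasurableSet E := measurableSet_ball.inter (measurableSet_abs_inner_sub_lt n c _)
  let S : ℕ → Set F := fun k => (fun w => w + (-(k / m : ℝ)) • n) ⁻¹' E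
  have disjoint : (Finset.range m : Set ℕ).PairwiseDisjoint S :=
    ((pairwiseDisjoint_translates_slab hn c m).subset (subset_univ _)).mono
      fun k => preimage_mono inter_subset_right
  have subset_ball : (⋃ k ∈ Finset.range m, S k) ⊆ Metric.ball 0 (R + 1) := by
    refine iUnion₂_subset fun k hk w hw => ?_
    have hkm : (k : ℝ) / m ≤ 1 :=
      div_le_one_of_le₀ (by exact_mod_cast (Finset.mem_range.1 hk).le) (Nat.cast_nonneg m)
    have norm_shift_lt : ‖w + (-(k / m : ℝ)) • n‖ < R := mem_ball_zero_iff.1 hw.1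
    rw [mem_ball_zero_iff]
    calc ‖w‖ = ‖(w + (-(k / m : ℝ)) • n) + (k / m : ℝ) • n‖ := by rw [neg_smul]; congr 1; abel
      _ ≤ ‖w + (-(k / m : ℝ)) • n‖ + ‖(k / m : ℝ) • n‖ := norm_add_le _ _
      _ < R + 1 := by
        refine add_lt_add_of_lt_of_le norm_shift_lt ?_
        rwa [norm_smul, hn, mul_one, Real.norm_of_nonneg (by positivity)]
  calc m * μ E = ∑ k ∈ Finset.range m, μ (S k) := by simp [S, measure_preimage_add_right]
    _ = μ (⋃ k ∈ Finset.range m, S k) :=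
      (measure_biUnion_finset disjoint fun k _ => measurable_add_const _ hEm).symm
    _ ≤ μ (Metric.ball 0 (R + 1)) := measure_mono subset_ball

lemma exists_forall_measure_ball_inter_slab_le (μ : Measure F) [μ.IsAddRightInvariant]
    [ProperSpace F] [IsFiniteMeasureOnCompacts μ] (R : ℝ) {δ : ℝ} (hδ : 0 < δ) :
    ∃ η : ℝ, 0 < η ∧ ∀ n : F, ‖n‖ = 1 → ∀ c : ℝ,
      μ (Metric.ball 0 R ∩ {w | |inner ℝ n w - c| < η}) ≤ ENNReal.ofReal δ := by
  obtain ⟨m, hm⟩ := exists_nat_gt (μ.real (Metric.ball (0 : F) (R + 1)) / δ)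
  have hm_pos : (0 : ℝ) < m := lt_of_le_of_lt (by positivity) hm
  refine ⟨1 / (2 * m), by positivity, fun n hn c => ?_⟩
  have ball_le : μ (Metric.ball (0 : F) (R + 1)) ≤ m * ENNReal.ofReal δ := by
    rw [← ENNReal.ofReal_natCast, ← ENNReal.ofReal_mul hm_pos.le,
      ← ENNReal.ofReal_toReal (measure_ball_lt_top (μ := μ)).ne]
    exact ENNReal.ofReal_le_ofReal ((div_lt_iff₀ hδ).1 hm).le
  exact (ENNReal.mul_le_mul_iff_right (by exact_mod_cast hm_pos.ne') (ENNReal.natCast_ne_top m)).1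
    ((natCast_mul_measure_ball_inter_slab_le μ hn c R m).trans ball_le)

end InnerProductSpace

section Entropy

lemma mul_log_add_mul_add_exp_neg_nonneg {x : ℝ} (hx : 0 ≤ x) (s : ℝ) :
    0 ≤ x * log x + x * s + exp (-s) := by
  rcases hx.eq_or_lt with rfl | hx
  · simp [exp_nonneg]
  have exp_neg_eq : exp (-s) = x * exp (-(log x + s)) := by
    rw [neg_add, exp_add, exp_neg (log x), exp_log hx]
    field_simp
  rw [exp_neg_eq]
  nlinarith [add_one_le_exp (-(log x + s))]

/-- The entropy density of `x`, made nonnegative by a multiple of the energy density and a fixed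
integrable weight. -/
def entropyDensity (x : ℝ) (v : V3) : ℝ :=
  x * log x + x * (2 + 2 * ‖v‖ ^ 2) + (1 + ‖v‖) ^ (-(4 : ℝ))

lemma entropyDensity_nonneg {x : ℝ} (hx : 0 ≤ x) (v : V3) : 0 ≤ entropyDensity x v := by
  have exp_eq : exp (-(4 * log (1 + ‖v‖))) = (1 + ‖v‖) ^ (-(4 : ℝ)) := by
    rw [rpow_def_of_pos (by positivity)]
    ring_nf
  have log_le : 4 * log (1 + ‖v‖) ≤ 2 + 2 * ‖v‖ ^ 2 := by
    nlinarith [log_le_sub_one_of_pos (show 0 < 1 + ‖v‖ by positivity), sq_nonneg (‖v‖ - 1),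
      norm_nonneg v]
  calc 0 ≤ x * log x + x * (4 * log (1 + ‖v‖)) + exp (-(4 * log (1 + ‖v‖))) :=
        mul_log_add_mul_add_exp_neg_nonneg hx _
    _ ≤ entropyDensity x v := by rw [entropyDensity, exp_eq]; gcongr

lemma mul_log_le_entropyDensity {x : ℝ} (hx : 0 ≤ x) (v : V3) :
    x * log x ≤ entropyDensity x v := by
  rw [entropyDensity, add_assoc]
  exact le_add_of_nonneg_right (by positivity)

lemma integrable_one_add_norm_rpow_neg_four : Integrable fun v : V3 => (1 + ‖v‖) ^ (-(4 : ℝ)) :=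
  integrable_one_add_norm (by simp; norm_num)

lemma integrable_mul_norm_sq (h : 𝓢(V3, ℝ)) : Integrable fun v => h v * ‖v‖ ^ 2 := by
  refine (h.integrable_pow_mul volume 2).mono' (by have := h.continuous; fun_prop)
    (ae_of_all _ fun v => ?_)
  rw [norm_mul, norm_pow, norm_norm, mul_comm]

lemma integrable_mul_energyWeight (h : 𝓢(V3, ℝ)) :
    Integrable fun v => h v * (2 + 2 * ‖v‖ ^ 2) := by
  have hint := (h.integrable.const_mul 2).add ((integrable_mul_norm_sq h).const_mul 2)
  exact hint.congr (ae_of_all _ fun v => by simp only [Pi.add_apply]; ring)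

lemma integrable_entropyDensity {h : 𝓢(V3, ℝ)} (h0 : ∀ v, 0 ≤ h v) :
    Integrable fun v => entropyDensity (h v) v := by
  set C := SchwartzMap.seminorm ℝ 0 0 h
  refine (((h.integrable.const_mul C).add (integrable_mul_energyWeight h)).add
    integrable_one_add_norm_rpow_neg_four).mono' ?_ (ae_of_all _ fun v => ?_)
  · have := h.continuous.measurable
    unfold entropyDensity
    exact Measurable.aestronglyMeasurable (by fun_prop)
  · rw [norm_of_nonneg (entropyDensity_nonneg (h0 v) v)]
    have mul_log_le : h v * log (h v) ≤ C * h v := by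
      rw [mul_comm C]
      exact mul_le_mul_of_nonneg_left ((log_le_self (h0 v)).trans
        ((le_abs_self _).trans (h.norm_le_seminorm ℝ v))) (h0 v)
    simpa only [entropyDensity, Pi.add_apply] using by gcongr

lemma integrable_mul_log {h : 𝓢(V3, ℝ)} (h0 : ∀ v, 0 ≤ h v) :
    Integrable fun v => h v * log (h v) := by
  refine (((integrable_entropyDensity h0).sub integrable_one_add_norm_rpow_neg_four).sub
    (integrable_mul_energyWeight h)).congr (ae_of_all _ fun v => ?_)
  simp only [Pi.sub_apply, entropyDensity]
  ring

lemma setIntegral_le_measureReal_mul_exp_add {X : Type*} [MeasurableSpace X] {μ : Measure X}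
    {h D : X → ℝ} (hh : Integrable h μ) (hD : Integrable D μ) (h0 : ∀ x, 0 ≤ h x)
    (hD0 : ∀ x, 0 ≤ D x) (hle : ∀ x, h x * log (h x) ≤ D x) {E : Set X} (hE : μ E ≠ ⊤)
    {L : ℝ} (hL : 0 < L) : ∫ x in E, h x ∂μ ≤ μ.real E * exp L + L⁻¹ * ∫ x, D x ∂μ := by
  have pointwise (x : X) : h x ≤ exp L + L⁻¹ * D x := by
    rcases le_or_gt (h x) (exp L) with hx | hx
    · exact le_add_of_le_of_nonneg hx (mul_nonneg (by positivity) (hD0 x))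
    · have hlog : L ≤ log (h x) := (lt_log_iff_exp_lt ((exp_pos L).trans hx)).2 hx |>.le
      refine le_add_of_nonneg_of_le (exp_nonneg L) ?_
      rw [le_inv_mul_iff₀ hL, mul_comm]
      exact (mul_le_mul_of_nonneg_left hlog (h0 x)).trans (hle x)
  have const_int : Integrable (fun _ => exp L) (μ.restrict E) := integrableOn_const hE
  calc ∫ x in E, h x ∂μ ≤ ∫ x in E, (exp L + L⁻¹ * D x) ∂μ :=
        setIntegral_mono hh.integrableOn (const_int.add (hD.const_mul _).integrableOn) pointwise
    _ = μ.real E * exp L + L⁻¹ * ∫ x in E, D x ∂μ := by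
        rw [integral_add const_int (hD.const_mul _).integrableOn, setIntegral_const,
          integral_const_mul, smul_eq_mul]
    _ ≤ μ.real E * exp L + L⁻¹ * ∫ x, D x ∂μ := by
        gcongr μ.real E * exp L + L⁻¹ * ?_
        exact setIntegral_le_integral hD (ae_of_all _ hD0)

end Entropy

/-- Nonnegative densities of unit mass, energy at most `3` and entropy at most `M`. -/
structure IsLandauState (M : ℝ) (h : V3 → ℝ) : Prop where
  nonneg : ∀ v, 0 ≤ h v
  mass_eq : ∫ v, h v = 1
  energy_le : ∫ v, h v * ‖v‖ ^ 2 ≤ 3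
  entropy_le : ∫ v, h v * log (h v) ≤ M

namespace IsLandauState

variable {M : ℝ} {h : 𝓢(V3, ℝ)}

lemma integral_entropyDensity_le (hh : IsLandauState M h) :
    ∫ v, entropyDensity (h v) v ≤ M + 8 + ∫ v : V3, (1 + ‖v‖) ^ (-(4 : ℝ)) := by
  have weighted : ∫ v, h v * (2 + 2 * ‖v‖ ^ 2) ≤ 8 := by
    calc ∫ v, h v * (2 + 2 * ‖v‖ ^ 2) = ∫ v, (2 * h v + 2 * (h v * ‖v‖ ^ 2)) := by
          congr 1 with v; ring
      _ = 2 * (∫ v, h v) + 2 * ∫ v, h v * ‖v‖ ^ 2 := by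
          rw [integral_add (h.integrable.const_mul 2) ((integrable_mul_norm_sq h).const_mul 2),
            integral_const_mul, integral_const_mul]
      _ ≤ 8 := by linarith [hh.mass_eq, hh.energy_le]
  have log_int := integrable_mul_log hh.nonneg
  simp only [entropyDensity]
  rw [integral_add (by exact log_int.add (integrable_mul_energyWeight h))
      integrable_one_add_norm_rpow_neg_four,
    integral_add log_int (integrable_mul_energyWeight h)]
  linarith [hh.entropy_le]

lemma exists_forall_setIntegral_le_one_third (M : ℝ) :
    ∃ δ : ℝ, 0 < δ ∧ ∀ h : 𝓢(V3, ℝ), IsLandauState M h → ∀ E : Set V3,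
      volume E ≤ ENNReal.ofReal δ → ∫ v in E, h v ≤ 1 / 3 := by
  set C := ∫ v : V3, (1 + ‖v‖) ^ (-(4 : ℝ))
  have hC : 0 ≤ C := integral_nonneg fun v => by positivity
  set L := 6 * (|M| + 8 + C) with hL
  have hL_pos : 0 < L := by positivity
  refine ⟨1 / 6 / exp L, by positivity, fun h hh E hvol => ?_⟩
  have volume_real_le : volume.real E ≤ 1 / 6 / exp L :=
    ENNReal.toReal_le_of_le_ofReal (by positivity) hvol
  have entropy_le : ∫ v, entropyDensity (h v) v ≤ |M| + 8 + C :=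
    hh.integral_entropyDensity_le.trans (by gcongr; exact le_abs_self M)
  calc ∫ v in E, h v ≤ volume.real E * exp L + L⁻¹ * ∫ v, entropyDensity (h v) v :=
        setIntegral_le_measureReal_mul_exp_add h.integrable (integrable_entropyDensity hh.nonneg)
          hh.nonneg (fun v => entropyDensity_nonneg (hh.nonneg v) v)
          (fun v => mul_log_le_entropyDensity (hh.nonneg v) v)
          (hvol.trans_lt ENNReal.ofReal_lt_top).ne hL_pos
    _ ≤ 1 / 6 / exp L * exp L + L⁻¹ * (|M| + 8 + C) := by gcongr
    _ = 1 / 3 := by rw [hL]; field_simp; norm_num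

lemma setIntegral_compl_ball_three_le (hh : IsLandauState M h) :
    ∫ v in (Metric.ball 0 3)ᶜ, h v ≤ 1 / 3 := by
  have int := (integrable_mul_norm_sq h).const_mul (1 / 9)
  calc ∫ v in (Metric.ball 0 3)ᶜ, h v ≤ ∫ v in (Metric.ball 0 3)ᶜ, 1 / 9 * (h v * ‖v‖ ^ 2) := by
        refine setIntegral_mono_on h.integrable.integrableOn int.integrableOn
          measurableSet_ball.compl fun v hv => ?_
        rw [mem_compl_iff, mem_ball_zero_iff, not_lt] at hv
        nlinarith [hh.nonneg v, pow_le_pow_left₀ (by norm_num) hv 2]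
    _ ≤ ∫ v, 1 / 9 * (h v * ‖v‖ ^ 2) := setIntegral_le_integral int (ae_of_all _ fun v =>
        mul_nonneg (by norm_num) (mul_nonneg (hh.nonneg v) (by positivity)))
    _ ≤ 1 / 3 := by rw [integral_const_mul]; linarith [hh.energy_le]

lemma exists_forall_one_third_le_setIntegral (M : ℝ) :
    ∃ η : ℝ, 0 < η ∧ ∀ h : 𝓢(V3, ℝ), IsLandauState M h → ∀ n : V3, ‖n‖ = 1 → ∀ c : ℝ,
      1 / 3 ≤ ∫ w in Metric.ball 0 3 \ {w | |inner ℝ n w - c| < η}, h w := by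
  obtain ⟨δ, hδ, small⟩ := exists_forall_setIntegral_le_one_third M
  obtain ⟨η, hη, slab⟩ :=
    exists_forall_measure_ball_inter_slab_le (volume : Measure V3) 3 hδ
  refine ⟨η, hη, fun h hh n hn c => ?_⟩
  have hslab := measurableSet_abs_inner_sub_lt n c η
  have split_ball := integral_inter_add_sdiff hslab
    (h.integrable.integrableOn (s := Metric.ball (0 : V3) 3) (μ := volume))
  have split := integral_add_compl (measurableSet_ball (x := (0 : V3)) (ε := 3))
    (h.integrable (μ := volume))
  linarith [small h hh _ (slab n hn c), hh.setIntegral_compl_ball_three_le, hh.mass_eq]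

end IsLandauState

lemma one_le_jap (v : V3) : 1 ≤ jap v := by
  rw [jap, one_le_sqrt]
  nlinarith [norm_nonneg v]

lemma jap_pos (v : V3) : 0 < jap v := one_pos.trans_le (one_le_jap v)

lemma norm_le_jap (v : V3) : ‖v‖ ≤ jap v := le_sqrt_of_sq_le (by linarith)

lemma jap_rpow_neg_three_le (v : V3) : jap v ^ (-(3 : ℝ)) / 64 ≤ (3 + ‖v‖)⁻¹ ^ 3 := by
  have rpow_eq : jap v ^ (-(3 : ℝ)) = (jap v)⁻¹ ^ 3 := by
    rw [rpow_neg (jap_pos v).le, inv_pow]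
    norm_cast
  calc jap v ^ (-(3 : ℝ)) / 64 = (4 * jap v)⁻¹ ^ 3 := by rw [rpow_eq, mul_inv]; ring
    _ ≤ (3 + ‖v‖)⁻¹ ^ 3 := by
      have := jap_pos v
      gcongr
      linarith [one_le_jap v, norm_le_jap v]

lemma sum_landauKernel_mul (z ξ : V3) :
    ∑ i, ∑ j, landauKernel i j z * ξ i * ξ j = landauQuadForm ξ z := by
  have norm_sq : ‖ξ‖ ^ 2 = ξ 0 ^ 2 + ξ 1 ^ 2 + ξ 2 ^ 2 := by
    rw [EuclideanSpace.real_norm_sq_eq, Fin.sum_univ_three]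
  have inner_eq : inner ℝ z ξ = z 0 * ξ 0 + z 1 * ξ 1 + z 2 * ξ 2 := by
    simp [PiLp.inner_apply, Fin.sum_univ_three, mul_comm]
  rw [landauQuadForm, norm_sq, inner_eq]
  simp [Fin.sum_univ_three, landauKernel, projPi]
  ring

lemma integrable_landauKernel_sub_mul (h : 𝓢(V3, ℝ)) (v : V3) (i j : Fin 3) :
    Integrable fun w => landauKernel i j (v - w) * h w := by
  have hint := (schwartz_convolutionExists (isL1AddLinfty_landauKernel i j) h v).integrable_swap
  exact hint

lemma integrable_landauQuadForm_sub_mul (h : 𝓢(V3, ℝ)) (v ξ : V3) :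
    Integrable fun w => landauQuadForm ξ (v - w) * h w := by
  simp_rw [← sum_landauKernel_mul, Finset.sum_mul, mul_right_comm _ _ (h _)]
  exact integrable_finsetSum _ fun i _ => integrable_finsetSum _ fun j _ =>
    ((integrable_landauKernel_sub_mul h v i j).mul_const _).mul_const _

lemma sum_coeffA_mul_eq_integral (h : 𝓢(V3, ℝ)) (v ξ : V3) :
    ∑ i, ∑ j, coeffA h v i j * ξ i * ξ j =
      (8 * π)⁻¹ * ∫ w, landauQuadForm ξ (v - w) * h w := by
  have int (i j : Fin 3) : Integrable fun w => landauKernel i j (v - w) * h w * ξ i * ξ j :=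
    ((integrable_landauKernel_sub_mul h v i j).mul_const _).mul_const _
  simp_rw [← sum_landauKernel_mul, Finset.sum_mul, mul_right_comm _ _ (h _)]
  rw [integral_finsetSum _ fun i _ => integrable_finsetSum _ fun j _ => int i j, Finset.mul_sum]
  refine Finset.sum_congr rfl fun i _ => ?_
  rw [integral_finsetSum _ fun j _ => int i j, Finset.mul_sum]
  refine Finset.sum_congr rfl fun j _ => ?_
  rw [integral_mul_const, integral_mul_const, coeffA]
  simp only [landauKernel]
  ring

-- A unit normal `n ⊥ ξ` sees a third of the mass inside `ball 0 3` and outside a thin slab around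
-- `v` with normal `n`, and there the kernel is bounded below.
lemma exists_coeffA_coercive (M : ℝ) : ∃ c : ℝ, 0 < c ∧ ∀ h : 𝓢(V3, ℝ), IsLandauState M h →
    ∀ v ξ : V3, c * jap v ^ (-(3 : ℝ)) * ‖ξ‖ ^ 2 ≤ ∑ i, ∑ j, coeffA h v i j * ξ i * ξ j := by
  obtain ⟨η, hη, mass⟩ := IsLandauState.exists_forall_one_third_le_setIntegral M
  refine ⟨(8 * π)⁻¹ * (η ^ 2 / 192), by positivity, fun h hh v ξ => ?_⟩
  obtain ⟨n, hn, hnξ⟩ := exists_norm_eq_one_inner_eq_zero (by simp) ξ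
  set S := Metric.ball (0 : V3) 3 \ {w | |inner ℝ n w - inner ℝ n v| < η}
  have hS : MeasurableSet S := measurableSet_ball.diff (measurableSet_abs_inner_sub_lt n _ η)
  set κ := ‖ξ‖ ^ 2 * η ^ 2 * (3 + ‖v‖)⁻¹ ^ 3 with hκ
  have kernel_ge (w : V3) (hw : w ∈ S) : κ ≤ landauQuadForm ξ (v - w) := by
    have inner_ge : η ^ 2 ≤ inner ℝ n (v - w) ^ 2 := by
      rw [inner_sub_right, ← sq_abs (_ - _), abs_sub_comm]
      gcongr
      exact not_lt.1 hw.2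
    have hz : v - w ≠ 0 := fun hz => by simp [hz, hη.ne'] at inner_ge
    have norm_le : ‖v - w‖ ≤ 3 + ‖v‖ := by
      linarith [norm_sub_le v w, mem_ball_zero_iff.1 hw.1]
    have := norm_pos_iff.2 hz
    exact le_trans (by rw [hκ]; gcongr) (le_landauQuadForm hn hnξ hz)
  rw [sum_coeffA_mul_eq_integral, mul_assoc, mul_assoc]
  refine mul_le_mul_of_nonneg_left ?_ (by positivity)
  have quad_int := integrable_landauQuadForm_sub_mul h v ξ
  calc η ^ 2 / 192 * (jap v ^ (-(3 : ℝ)) * ‖ξ‖ ^ 2)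
      = ‖ξ‖ ^ 2 * η ^ 2 * (jap v ^ (-(3 : ℝ)) / 64) * (1 / 3) := by ring
    _ ≤ κ * ∫ w in S, h w := by
        rw [hκ]
        gcongr
        exacts [jap_rpow_neg_three_le v, mass h hh n hn _]
    _ = ∫ w in S, κ * h w := (integral_const_mul _ _).symm
    _ ≤ ∫ w in S, landauQuadForm ξ (v - w) * h w :=
        setIntegral_mono_on (h.integrable.const_mul κ).integrableOn quad_int.integrableOn hS
          fun w hw => mul_le_mul_of_nonneg_right (kernel_ge w hw) (hh.nonneg w)
    _ ≤ ∫ w, landauQuadForm ξ (v - w) * h w := setIntegral_le_integral quad_int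
        (ae_of_all _ fun w => mul_nonneg (landauQuadForm_nonneg ξ _) (hh.nonneg w))

/-! ### Regularised truncated powers -/

lemma hasDerivAt_comp_max_sub_zero {φ φ' : ℝ → ℝ} (hφ : ∀ x, 0 ≤ x → HasDerivAt φ (φ' x) x)
    (h0 : φ' 0 = 0) (l s : ℝ) :
    HasDerivAt (fun s => φ (max (s - l) 0)) (φ' (max (s - l) 0)) s := by
  have left {s : ℝ} (hs : s ≤ l) :
      HasDerivWithinAt (fun s => φ (max (s - l) 0)) (φ' (max (s - l) 0)) (Iic l) s := by
    have const_eq (u : ℝ) (hu : u ∈ Iic l) : φ (max (u - l) 0) = φ 0 := by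
      rw [max_eq_right (sub_nonpos.2 hu)]
    rw [max_eq_right (sub_nonpos.2 hs), h0]
    exact (hasDerivWithinAt_const s _ (φ 0)).congr const_eq (const_eq s hs)
  have right {s : ℝ} (hs : l ≤ s) :
      HasDerivWithinAt (fun s => φ (max (s - l) 0)) (φ' (max (s - l) 0)) (Ici l) s := by
    have shift_eq (u : ℝ) (hu : u ∈ Ici l) : φ (max (u - l) 0) = φ (u - l) := by
      rw [max_eq_left (sub_nonneg.2 hu)]
    rw [max_eq_left (sub_nonneg.2 hs)]
    exact ((hφ _ (sub_nonneg.2 hs)).comp_sub_const s l).hasDerivWithinAt.congr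
      shift_eq (shift_eq s hs)
  rcases lt_trichotomy s l with hs | rfl | hs
  · exact (left hs.le).hasDerivAt (Iic_mem_nhds hs)
  · simpa [← hasDerivWithinAt_univ] using (left le_rfl).union (right le_rfl)
  · exact (right hs.le).hasDerivAt (Ici_mem_nhds hs)

/-- The regularisation `(s - l)₊ ^ (p + 1) / ((s - l)₊ + ε)` of the truncated power `(s - l)₊ ^ p`,
which is of class `C²` for `1 < p`. -/
def truncPow (p ε l s : ℝ) : ℝ := max (s - l) 0 ^ (p + 1) / (max (s - l) 0 + ε)

/-- The first derivative of `truncPow p ε l`. -/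
def truncPowDeriv (p ε l s : ℝ) : ℝ :=
  max (s - l) 0 ^ p * (p * max (s - l) 0 + (p + 1) * ε) / (max (s - l) 0 + ε) ^ 2

/-- The second derivative of `truncPow p ε l`. -/
def truncPowDeriv₂ (p ε l s : ℝ) : ℝ :=
  max (s - l) 0 ^ (p - 1) * (p * (p - 1) * max (s - l) 0 ^ 2
    + 2 * (p ^ 2 - 1) * ε * max (s - l) 0 + p * (p + 1) * ε ^ 2) / (max (s - l) 0 + ε) ^ 3

lemma max_sub_zero_nonneg (s l : ℝ) : 0 ≤ max (s - l) 0 := le_max_right _ _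

section TruncPow

variable {p ε : ℝ}

lemma rpow_eq_rpow_sub_one_mul (hp : 0 < p) {x : ℝ} (hx : 0 ≤ x) : x ^ p = x ^ (p - 1) * x := by
  rw [← rpow_add_one' hx (by linarith), sub_add_cancel]

lemma truncPow_nonneg (hε : 0 < ε) (l s : ℝ) : 0 ≤ truncPow p ε l s := by
  have := max_sub_zero_nonneg s l
  unfold truncPow
  positivity

lemma truncPow_le (hp : 0 < p) (hε : 0 < ε) (l s : ℝ) :
    truncPow p ε l s ≤ max (s - l) 0 ^ p := by
  have hx := max_sub_zero_nonneg s l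
  rw [truncPow, rpow_add_one' hx (by linarith), div_le_iff₀ (by positivity)]
  gcongr
  linarith

lemma hasDerivAt_truncPow (hp : 0 < p) (hε : 0 < ε) (l s : ℝ) :
    HasDerivAt (truncPow p ε l) (truncPowDeriv p ε l s) s := by
  refine hasDerivAt_comp_max_sub_zero (φ := fun x => x ^ (p + 1) / (x + ε))
    (φ' := fun x => x ^ p * (p * x + (p + 1) * ε) / (x + ε) ^ 2) (fun x hx => ?_)
    (by simp [zero_rpow hp.ne']) l s
  have hxε : x + ε ≠ 0 := by positivity
  refine ((hasDerivAt_rpow_const (Or.inr (by linarith))).fun_div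
    ((hasDerivAt_id x).add_const ε) hxε).congr_deriv ?_
  simp only [id, add_sub_cancel_right, rpow_add_one' hx (show p + 1 ≠ 0 by linarith)]
  ring

lemma truncPowDeriv_nonneg (hp : 0 < p) (hε : 0 < ε) (l s : ℝ) : 0 ≤ truncPowDeriv p ε l s := by
  have := max_sub_zero_nonneg s l
  unfold truncPowDeriv
  positivity

lemma truncPowDeriv_le_div (hp : 0 < p) (hε : 0 < ε) (l s : ℝ) :
    truncPowDeriv p ε l s ≤ (p + 1) * (max (s - l) 0 ^ p / (max (s - l) 0 + ε)) := by
  have hx := max_sub_zero_nonneg s l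
  unfold truncPowDeriv
  generalize max (s - l) 0 = x at hx ⊢
  calc x ^ p * (p * x + (p + 1) * ε) / (x + ε) ^ 2
      ≤ x ^ p * ((p + 1) * (x + ε)) / (x + ε) ^ 2 := by gcongr; linarith
    _ = (p + 1) * (x ^ p / (x + ε)) := by field_simp

lemma truncPowDeriv_le (hp : 0 < p) (hε : 0 < ε) (l s : ℝ) :
    truncPowDeriv p ε l s ≤ (p + 1) * max (s - l) 0 ^ (p - 1) := by
  have hx := max_sub_zero_nonneg s l
  refine (truncPowDeriv_le_div hp hε l s).trans ?_
  rw [rpow_eq_rpow_sub_one_mul hp hx, mul_div_assoc]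
  gcongr
  exact mul_le_of_le_one_right (by positivity)
    (div_le_one_of_le₀ (by linarith) (by positivity))

lemma hasDerivAt_truncPowDeriv (hp : 1 < p) (hε : 0 < ε) (l s : ℝ) :
    HasDerivAt (truncPowDeriv p ε l) (truncPowDeriv₂ p ε l s) s := by
  refine hasDerivAt_comp_max_sub_zero
    (φ := fun x => x ^ p * (p * x + (p + 1) * ε) / (x + ε) ^ 2)
    (φ' := fun x => x ^ (p - 1) * (p * (p - 1) * x ^ 2 + 2 * (p ^ 2 - 1) * ε * x
      + p * (p + 1) * ε ^ 2) / (x + ε) ^ 3) (fun x hx => ?_)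
    (by simp [zero_rpow (sub_pos.2 hp).ne']) l s
  have hxε : x + ε ≠ 0 := by positivity
  have hpow : HasDerivAt (fun x => x ^ p) (p * x ^ (p - 1)) x :=
    hasDerivAt_rpow_const (Or.inr hp.le)
  have hlin : HasDerivAt (fun x => p * x + (p + 1) * ε) (p * 1) x :=
    ((hasDerivAt_id x).const_mul p).add_const _
  refine ((hpow.fun_mul hlin).fun_div (((hasDerivAt_id x).add_const ε).fun_pow 2)
    (pow_ne_zero 2 hxε)).congr_deriv ?_
  simp only [id, rpow_eq_rpow_sub_one_mul (zero_lt_one.trans hp) hx]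
  field_simp
  ring

lemma continuous_truncPowDeriv₂ (hp : 1 < p) (hε : 0 < ε) (l : ℝ) :
    Continuous (truncPowDeriv₂ p ε l) := by
  have hmax : Continuous fun s : ℝ => max (s - l) 0 := by fun_prop
  refine ((hmax.rpow_const fun _ => Or.inr (by linarith)).mul (by fun_prop)).div (by fun_prop)
    fun s => ?_
  have := max_sub_zero_nonneg s l
  positivity

lemma le_truncPowDeriv₂ (hp : 1 < p) (hε : 0 < ε) (l s : ℝ) :
    p * (p - 1) * (max (s - l) 0 ^ (p - 1) / (max (s - l) 0 + ε)) ≤ truncPowDeriv₂ p ε l s := by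
  have hx := max_sub_zero_nonneg s l
  unfold truncPowDeriv₂
  generalize max (s - l) 0 = x at hx ⊢
  have quadratic_le : p * (p - 1) * (x + ε) ^ 2 ≤
      p * (p - 1) * x ^ 2 + 2 * (p ^ 2 - 1) * ε * x + p * (p + 1) * ε ^ 2 := by
    nlinarith [mul_nonneg hε.le hx, sq_nonneg ε]
  calc p * (p - 1) * (x ^ (p - 1) / (x + ε))
      = x ^ (p - 1) * (p * (p - 1) * (x + ε) ^ 2) / (x + ε) ^ 3 := by field_simp
    _ ≤ _ := by gcongr

lemma truncPowDeriv₂_nonneg (hp : 1 < p) (hε : 0 < ε) (l s : ℝ) :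
    0 ≤ truncPowDeriv₂ p ε l s := by
  have := max_sub_zero_nonneg s l
  have := sub_pos.2 hp
  exact le_trans (by positivity) (le_truncPowDeriv₂ hp hε l s)

lemma truncPowDeriv_sq_le (hp : 1 < p) (hε : 0 < ε) (l s : ℝ) :
    truncPowDeriv p ε l s ^ 2 ≤
      (p + 1) ^ 2 / (p * (p - 1)) * max (s - l) 0 ^ p * truncPowDeriv₂ p ε l s := by
  have := max_sub_zero_nonneg s l
  have hp0 := zero_lt_one.trans hp
  have := sub_pos.2 hp
  calc truncPowDeriv p ε l s ^ 2
      ≤ (p + 1) * max (s - l) 0 ^ (p - 1) *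
          ((p + 1) * (max (s - l) 0 ^ p / (max (s - l) 0 + ε))) := by
        rw [sq]
        exact mul_le_mul (truncPowDeriv_le hp0 hε l s) (truncPowDeriv_le_div hp0 hε l s)
          (truncPowDeriv_nonneg hp0 hε l s) (by positivity)
    _ = (p + 1) ^ 2 / (p * (p - 1)) * max (s - l) 0 ^ p *
          (p * (p - 1) * (max (s - l) 0 ^ (p - 1) / (max (s - l) 0 + ε))) := by field_simp
    _ ≤ _ := by
        gcongr
        exact le_truncPowDeriv₂ hp hε l s

lemma hasDerivAt_mul_truncPowDeriv_sub (hp : 1 < p) (hε : 0 < ε) (l s : ℝ) :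
    HasDerivAt (fun s => s * truncPowDeriv p ε l s - truncPow p ε l s)
      (s * truncPowDeriv₂ p ε l s) s :=
  (((hasDerivAt_id s).fun_mul (hasDerivAt_truncPowDeriv hp hε l s)).fun_sub
    (hasDerivAt_truncPow (zero_lt_one.trans hp) hε l s)).congr_deriv (by simp)

lemma max_sub_zero_rpow_le (hp : 0 < p) {k l : ℝ} (hkl : k < l) (s : ℝ) :
    max (s - l) 0 ^ p ≤ (l - k)⁻¹ * max (s - k) 0 ^ (p + 1) := by
  have hlk := sub_pos.2 hkl
  have := max_sub_zero_nonneg s k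
  rcases le_or_gt s l with hs | hs
  · rw [max_eq_right (sub_nonpos.2 hs), zero_rpow hp.ne']
    positivity
  · rw [max_eq_left (by linarith : 0 ≤ s - l), max_eq_left (by linarith : 0 ≤ s - k),
      rpow_add_one' (by linarith) (by linarith), inv_mul_eq_div, le_div_iff₀ hlk]
    have hsk : 0 ≤ s - k := by linarith
    gcongr

lemma sq_le_of_lt {k l s : ℝ} (hk : 0 < k) (hkl : k < l) (hls : l < s) :
    s ^ 2 ≤ (2 + 2 * (l ^ 2 / (l - k) ^ 2)) * (s - k) ^ 2 := by
  have := sub_pos.2 hkl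
  have ratio : l ^ 2 ≤ l ^ 2 / (l - k) ^ 2 * (s - k) ^ 2 := by
    rw [div_mul_eq_mul_div, le_div_iff₀ (by positivity)]
    gcongr
  nlinarith [sq_nonneg (s - k - l), sq_nonneg (s - k - k)]

lemma mul_mul_truncPowDeriv_sub_le (hp : 1 < p) (hε : 0 < ε) {k l s : ℝ} (hs : 0 ≤ s) (hk : 0 < k)
    (hkl : k < l) : s * (s * truncPowDeriv p ε l s - truncPow p ε l s) ≤
      (p + 1) * (2 + 2 * (l ^ 2 / (l - k) ^ 2)) * max (s - k) 0 ^ (p + 1) := by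
  have hp0 := zero_lt_one.trans hp
  have := max_sub_zero_nonneg s k
  have drop_truncPow : s * (s * truncPowDeriv p ε l s - truncPow p ε l s) ≤
      s ^ 2 * ((p + 1) * max (s - l) 0 ^ (p - 1)) := by
    calc s * (s * truncPowDeriv p ε l s - truncPow p ε l s) ≤ s ^ 2 * truncPowDeriv p ε l s := by
          nlinarith [mul_nonneg hs (truncPow_nonneg (p := p) hε l s)]
      _ ≤ _ := by
          gcongr
          exact truncPowDeriv_le hp0 hε l s
  refine drop_truncPow.trans ?_
  rcases le_or_gt s l with hsl | hls
  · rw [max_eq_right (sub_nonpos.2 hsl), zero_rpow (by linarith), mul_zero, mul_zero]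
    positivity
  · have hsk : 0 < s - k := by linarith
    have rpow_split : (s - k) ^ (p + 1) = (s - k) ^ 2 * (s - k) ^ (p - 1) := by
      rw [← rpow_natCast, ← rpow_add hsk]
      push_cast
      ring_nf
    rw [max_eq_left (sub_pos.2 hls).le, max_eq_left hsk.le, rpow_split]
    calc s ^ 2 * ((p + 1) * (s - l) ^ (p - 1))
        ≤ (2 + 2 * (l ^ 2 / (l - k) ^ 2)) * (s - k) ^ 2 * ((p + 1) * (s - k) ^ (p - 1)) := by
          gcongr
          exact sq_le_of_lt hk hkl hls
      _ = _ := by ring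

end TruncPow

/-! ### The size of the Landau coefficients on superlevel sets -/

/-- The convolution `coulombBound ⋆ h`, a common pointwise bound for `A[h]` and `∇a[h]`. -/
def coeffBound (h : V3 → ℝ) : V3 → ℝ := coulombBound ⋆ h

lemma rpow_mul_le_rpow_add_rpow {a b p : ℝ} (ha : 0 ≤ a) (hb : 0 ≤ b) (hp : 0 < p) :
    a ^ p * b ≤ a ^ (p + 1) + b ^ (p + 1) := by
  have hp1 : p + 1 ≠ 0 := by positivity
  rcases le_total a b with hab | hba
  · calc a ^ p * b ≤ b ^ p * b := by gcongr
      _ = b ^ (p + 1) := (rpow_add_one' hb hp1).symm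
      _ ≤ _ := le_add_of_nonneg_left (by positivity)
  · calc a ^ p * b ≤ a ^ p * a := by gcongr
      _ = a ^ (p + 1) := (rpow_add_one' ha hp1).symm
      _ ≤ _ := le_add_of_nonneg_right (by positivity)

section YoungConvolution

variable {G : Type*} [AddGroup G] [MeasurableSpace G] {μ : Measure G} {κ y : G → ℝ}

lemma rpow_mul_convolution_le {p : ℝ} (hp : 0 < p) (hκ : Integrable κ μ) (hκ0 : ∀ z, 0 ≤ κ z)
    (hy0 : ∀ z, 0 ≤ y z) {v : G}
    (hex : ConvolutionExistsAt κ (fun z => y z ^ (p + 1)) v (ContinuousLinearMap.lsmul ℝ ℝ) μ) :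
    y v ^ p * (κ ⋆[ContinuousLinearMap.lsmul ℝ ℝ, μ] y) v ≤ (∫ z, κ z ∂μ) * y v ^ (p + 1) +
      (κ ⋆[ContinuousLinearMap.lsmul ℝ ℝ, μ] fun z => y z ^ (p + 1)) v := by
  have hex' : Integrable (fun z => κ z * y (v - z) ^ (p + 1)) μ := hex
  simp only [convolution, ContinuousLinearMap.lsmul_apply, smul_eq_mul]
  rw [← integral_const_mul, ← integral_mul_const, ← integral_add (hκ.mul_const _) hex']
  refine integral_mono_of_nonneg (ae_of_all _ fun z => ?_) ((hκ.mul_const _).add hex')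
    (ae_of_all _ fun z => ?_)
  · exact mul_nonneg (rpow_nonneg (hy0 v) p) (mul_nonneg (hκ0 z) (hy0 _))
  · calc y v ^ p * (κ z * y (v - z)) = κ z * (y v ^ p * y (v - z)) := by ring
      _ ≤ κ z * (y v ^ (p + 1) + y (v - z) ^ (p + 1)) :=
        mul_le_mul_of_nonneg_left (rpow_mul_le_rpow_add_rpow (hy0 v) (hy0 _) hp) (hκ0 z)
      _ = _ := mul_add _ _ _

end YoungConvolution

lemma integral_coulombBoundNear_nonneg : 0 ≤ ∫ z, coulombBoundNear z :=
  integral_nonneg fun z => coulombBoundNear_nonneg z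

/-- The constant in the bound of `∫ (h - l)₊ ^ p * coeffBound h` by `∫ (h - k)₊ ^ (p + 1)` for
densities `h` of unit mass. -/
def coeffBoundConst (k l : ℝ) : ℝ :=
  (2 + k * ∫ z, coulombBoundNear z) / (l - k) + 2 * ∫ z, coulombBoundNear z

lemma coeffBoundConst_nonneg {k l : ℝ} (hk : 0 ≤ k) (hkl : k < l) : 0 ≤ coeffBoundConst k l := by
  have := integral_coulombBoundNear_nonneg
  have := sub_pos.2 hkl
  unfold coeffBoundConst
  positivity

section Schwartz

variable (h : 𝓢(V3, ℝ))

lemma continuous_coeffBound : Continuous (coeffBound h) :=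
  continuous_convolution_schwartz isL1AddLinfty_coulombBound h

lemma continuous_max_sub_zero_rpow (l : ℝ) {r : ℝ} (hr : 0 < r) :
    Continuous fun v => max (h v - l) 0 ^ r :=
  ((h.continuous.sub continuous_const).max continuous_const).rpow_const fun _ => Or.inr hr.le

lemma hasCompactSupport_max_sub_zero {l : ℝ} (hl : 0 < l) :
    HasCompactSupport fun v => max (h v - l) 0 := by
  have hlt : ∀ᶠ v in cocompact V3, h v < l :=
    h.toZeroAtInfty.zero_at_infty'.eventually_lt_const hl
  rw [hasCompactSupport_iff_eventuallyEq, coclosedCompact_eq_cocompact]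
  filter_upwards [hlt] with v hv
  exact max_eq_right (by linarith)

lemma hasCompactSupport_max_sub_zero_rpow {l r : ℝ} (hl : 0 < l) (hr : 0 < r) :
    HasCompactSupport fun v => max (h v - l) 0 ^ r :=
  (hasCompactSupport_max_sub_zero h hl).comp_left (g := fun x : ℝ => x ^ r) (zero_rpow hr.ne')

lemma integrable_max_sub_zero_rpow {l r : ℝ} (hl : 0 < l) (hr : 0 < r) :
    Integrable fun v => max (h v - l) 0 ^ r :=
  (continuous_max_sub_zero_rpow h l hr).integrable_of_hasCompactSupport
    (hasCompactSupport_max_sub_zero_rpow h hl hr)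

variable {h} (h0 : ∀ v, 0 ≤ h v)
include h0

lemma coeffBound_nonneg (v : V3) : 0 ≤ coeffBound h v :=
  integral_nonneg fun z => mul_nonneg (coulombBound_nonneg z) (h0 _)

lemma abs_convolution_le_coeffBound {k : V3 → ℝ} (hk : ∀ z, |k z| ≤ coulombBound z) (v : V3) :
    |(k ⋆ h) v| ≤ coeffBound h v := by
  have hint : Integrable fun z => coulombBound z * h (v - z) :=
    schwartz_convolutionExists isL1AddLinfty_coulombBound h v
  refine norm_integral_le_of_norm_le (f := fun z => k z * h (v - z)) hint (ae_of_all _ fun z => ?_)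
  rw [norm_mul, Real.norm_of_nonneg (h0 _)]
  exact mul_le_mul_of_nonneg_right (hk z) (h0 _)

lemma abs_coeffA_le_coeffBound (v : V3) (i j : Fin 3) : |coeffA h v i j| ≤ coeffBound h v := by
  rw [coeffA_eq_convolution, abs_mul, abs_of_nonneg (by positivity)]
  exact (mul_le_of_le_one_left (abs_nonneg _) <|
      inv_le_one_of_one_le₀ (by linarith [pi_gt_three])).trans
    (abs_convolution_le_coeffBound h0 (abs_landauKernel_le i j) v)

lemma abs_pd_coeffa_le_coeffBound (v : V3) (i : Fin 3) :
    |pd i (coeffa h) v| ≤ coeffBound h v := by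
  rw [pd_coeffa, abs_mul, abs_neg, abs_of_nonneg (a := (4 * π)⁻¹) (by positivity)]
  exact (mul_le_of_le_one_left (abs_nonneg _) <|
      inv_le_one_of_one_le₀ (by linarith [pi_gt_three])).trans
    (abs_convolution_le_coeffBound h0 (abs_newtonFieldKernel_le i) v)

lemma coeffBound_le {k : ℝ} (hk : 0 < k) (v : V3) :
    coeffBound h v ≤ 2 * (∫ w, h w) + k * (∫ z, coulombBoundNear z) +
      (coulombBoundNear ⋆ fun w => max (h w - k) 0) v := by
  have hnear : Integrable fun z => coulombBoundNear z * max (h (v - z) - k) 0 :=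
    (hasCompactSupport_max_sub_zero h hk).convolutionExists_right (ContinuousLinearMap.lsmul ℝ ℝ)
      integrable_coulombBoundNear.locallyIntegrable
      ((h.continuous.sub continuous_const).max continuous_const) v
  have hmass : Integrable fun z => 2 * h (v - z) :=
    (h.integrable (μ := volume)).comp_sub_left v |>.const_mul 2
  have hconst := integrable_coulombBoundNear.const_mul k
  calc coeffBound h v ≤ ∫ z, (2 * h (v - z) + k * coulombBoundNear z +
        coulombBoundNear z * max (h (v - z) - k) 0) := by
        refine integral_mono (schwartz_convolutionExists isL1AddLinfty_coulombBound h v)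
          ((hmass.add hconst).add hnear) fun z => ?_
        have split : h (v - z) ≤ k + max (h (v - z) - k) 0 := by
          linarith [le_max_left (h (v - z) - k) 0]
        have := mul_le_mul_of_nonneg_right (coulombBound_le_near_add_two z) (h0 (v - z))
        have := mul_le_mul_of_nonneg_left split (coulombBoundNear_nonneg z)
        simp only [ContinuousLinearMap.lsmul_apply, smul_eq_mul]
        linarith
    _ = _ := by
        rw [integral_add (by exact hmass.add hconst) hnear, integral_add hmass hconst,
          integral_const_mul, integral_const_mul, integral_sub_left_eq_self (fun w => h w)]
        rfl

lemma max_sub_zero_rpow_mul_coeffBound_le (h1 : ∫ v, h v = 1) {p k l : ℝ} (hp : 0 < p)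
    (hk : 0 < k) (hkl : k < l) (v : V3) :
    max (h v - l) 0 ^ p * coeffBound h v ≤
      ((2 + k * ∫ z, coulombBoundNear z) / (l - k) + ∫ z, coulombBoundNear z) *
        max (h v - k) 0 ^ (p + 1) +
      (coulombBoundNear ⋆ fun w => max (h w - k) 0 ^ (p + 1)) v := by
  have hκ := integral_coulombBoundNear_nonneg
  have hbound := coeffBound_le h0 hk v
  rw [h1, mul_one] at hbound
  have hconv : 0 ≤ (coulombBoundNear ⋆ fun w => max (h w - k) 0) v :=
    integral_nonneg fun z => mul_nonneg (coulombBoundNear_nonneg z) (max_sub_zero_nonneg _ k)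
  have far := max_sub_zero_rpow_le hp hkl (h v)
  have near := rpow_mul_convolution_le hp integrable_coulombBoundNear coulombBoundNear_nonneg
    (fun w => max_sub_zero_nonneg (h w) k)
    ((hasCompactSupport_max_sub_zero_rpow h hk (r := p + 1) (by positivity)).convolutionExists_right
      (ContinuousLinearMap.lsmul ℝ ℝ) integrable_coulombBoundNear.locallyIntegrable
      (continuous_max_sub_zero_rpow h k (by positivity)) v)
  have := max_sub_zero_nonneg (h v) l
  calc max (h v - l) 0 ^ p * coeffBound h v
      ≤ max (h v - l) 0 ^ p * (2 + k * (∫ z, coulombBoundNear z) +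
          (coulombBoundNear ⋆ fun w => max (h w - k) 0) v) := by gcongr
    _ = (2 + k * ∫ z, coulombBoundNear z) * max (h v - l) 0 ^ p +
          max (h v - l) 0 ^ p * (coulombBoundNear ⋆ fun w => max (h w - k) 0) v := by ring
    _ ≤ (2 + k * ∫ z, coulombBoundNear z) * ((l - k)⁻¹ * max (h v - k) 0 ^ (p + 1)) +
          max (h v - k) 0 ^ p * (coulombBoundNear ⋆ fun w => max (h w - k) 0) v := by gcongr
    _ ≤ _ := by rw [div_eq_mul_inv]; linarith

lemma integral_max_sub_zero_rpow_mul_coeffBound_le (h1 : ∫ v, h v = 1) {p k l : ℝ} (hp : 0 < p)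
    (hk : 0 < k) (hkl : k < l) :
    ∫ v, max (h v - l) 0 ^ p * coeffBound h v ≤
      coeffBoundConst k l * ∫ v, max (h v - k) 0 ^ (p + 1) := by
  have hpow := integrable_max_sub_zero_rpow h hk (r := p + 1) (by positivity)
  have hconv := integrable_coulombBoundNear.integrable_convolution
    (ContinuousLinearMap.lsmul ℝ ℝ) hpow
  refine (integral_mono_of_nonneg (ae_of_all _ fun v => ?_) ((hpow.const_mul _).add hconv)
    (ae_of_all _ (max_sub_zero_rpow_mul_coeffBound_le h0 h1 hp hk hkl))).trans_eq ?_
  · exact mul_nonneg (rpow_nonneg (max_sub_zero_nonneg _ l) p) (coeffBound_nonneg h0 v)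
  · rw [integral_add' (hpow.const_mul _) hconv, integral_const_mul,
      integral_convolution _ integrable_coulombBoundNear hpow, ContinuousLinearMap.lsmul_apply,
      smul_eq_mul, coeffBoundConst]
    ring

end Schwartz

/-! ### The energy inequality at a fixed time -/

section QuadraticForm

variable {ι : Type*} [Fintype ι] {A : ι → ι → ℝ}

lemma sum_sum_mul_sq_le (hsymm : ∀ i j, A i j = A j i)
    (hpos : ∀ x : ι → ℝ, 0 ≤ ∑ i, ∑ j, A i j * x i * x j) (x y : ι → ℝ) :
    (∑ i, ∑ j, A i j * x i * y j) ^ 2 ≤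
      (∑ i, ∑ j, A i j * x i * x j) * ∑ i, ∑ j, A i j * y i * y j := by
  classical
  let B := Matrix.toBilin' (Matrix.of A)
  have B_apply (x y : ι → ℝ) : B x y = ∑ i, ∑ j, A i j * x i * y j := by
    simp only [B, Matrix.toBilin'_apply, Matrix.of_apply, mul_comm (x _)]
  have B_symm : B.IsSymm :=
    Matrix.isSymm_toBilin'_iff_isSymm.2 (Matrix.IsSymm.ext fun i j => hsymm j i)
  simpa only [B_apply] using
    LinearMap.BilinForm.apply_sq_le_of_symm B (fun x => (hpos x).trans_eq (B_apply x x).symm)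
      (LinearMap.BilinForm.isSymm_iff.1 B_symm) x y

lemma sum_sum_mul_mul_le {N d : ℝ} {x : ι → ℝ} (hA : ∀ i j, |A i j| ≤ N) (hx : ∀ i, |x i| ≤ d) :
    ∑ i, ∑ j, A i j * x i * x j ≤ Fintype.card ι ^ 2 * (N * d ^ 2) := by
  have term_le (i j : ι) : A i j * x i * x j ≤ N * d ^ 2 := by
    have hN := (abs_nonneg _).trans (hA i j)
    have hd := (abs_nonneg _).trans (hx i)
    calc A i j * x i * x j ≤ |A i j| * |x i| * |x j| := by
          rw [← abs_mul, ← abs_mul]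
          exact le_abs_self _
      _ ≤ N * d * d := by gcongr; exacts [hA i j, hx i, hx j]
      _ = N * d ^ 2 := by ring
  calc ∑ i, ∑ j, A i j * x i * x j ≤ ∑ _i : ι, ∑ _j : ι, N * d ^ 2 :=
        Finset.sum_le_sum fun i _ => Finset.sum_le_sum fun j _ => term_le i j
    _ = _ := by
        simp only [Finset.sum_const, Finset.card_univ, nsmul_eq_mul]
        ring

lemma sum_mul_le {N d : ℝ} {a x : ι → ℝ} (ha : ∀ i, |a i| ≤ N) (hx : ∀ i, |x i| ≤ d) :
    ∑ i, a i * x i ≤ Fintype.card ι * (N * d) := by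
  have term_le (i : ι) : a i * x i ≤ N * d := by
    have hN := (abs_nonneg _).trans (ha i)
    calc a i * x i ≤ |a i| * |x i| := by
          rw [← abs_mul]
          exact le_abs_self _
      _ ≤ N * d := by gcongr; exacts [ha i, hx i]
  simpa using Finset.sum_le_sum fun i (_ : i ∈ Finset.univ) => term_le i

end QuadraticForm

lemma neg_two_mul_mul_le_of_sq_le {b m K B P Q : ℝ} (hm : m ^ 2 ≤ P * Q) (hb : b ^ 2 ≤ K * B)
    (hB : 0 ≤ B) (hP : 0 ≤ P) (hK : 0 ≤ K) (hQ : 0 ≤ Q) :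
    -(2 * b * m) ≤ 1 / 2 * (B * P) + 2 * (K * Q) := by
  have sq_le : (2 * b * m) ^ 2 ≤ (1 / 2 * (B * P) + 2 * (K * Q)) ^ 2 := by
    calc (2 * b * m) ^ 2 = 4 * (b ^ 2 * m ^ 2) := by ring
      _ ≤ 4 * (K * B * (P * Q)) := by gcongr
      _ ≤ _ := by nlinarith [sq_nonneg (1 / 2 * (B * P) - 2 * (K * Q))]
  exact neg_le.1 (abs_le_of_sq_le_sq' sq_le (by positivity)).1

/- The drift `s a` is rewritten as the gradient of `s ↦ s β - b` tested against `a`, up to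
`2 b a · X`; the cross term `2 β A X · g` is absorbed by half of `B A g · g`. -/
lemma neg_sum_mul_flux_le {A : Fin 3 → Fin 3 → ℝ} {g a X : Fin 3 → ℝ} {s b β B J K q N d : ℝ}
    (hsymm : ∀ i j, A i j = A j i)
    (hcoer : ∀ ξ : Fin 3 → ℝ, J * ∑ i, ξ i ^ 2 ≤ ∑ i, ∑ j, A i j * ξ i * ξ j)
    (hA : ∀ i j, |A i j| ≤ N) (ha : ∀ i, |a i| ≤ N) (hX : ∀ i, |X i| ≤ d)
    (hJ : 0 ≤ J) (hK : 0 ≤ K) (hB : 0 ≤ B) (hb : 0 ≤ b) (hbq : b ≤ q)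
    (hβ : β ^ 2 ≤ K * q * B) :
    -∑ i, (B * g i + 2 * β * X i) * (∑ j, A i j * g j - s * a i) ≤
      -(1 / 2 * (B * (J * ∑ i, g i ^ 2))) +
        (∑ i, a i * (s * B * g i + 2 * (s * β - b) * X i) +
          (18 * K * d ^ 2 + 6 * d) * (q * N)) := by
  have hq : 0 ≤ q := hb.trans hbq
  have hN : 0 ≤ N := (abs_nonneg _).trans (ha 0)
  have hd : 0 ≤ d := (abs_nonneg _).trans (hX 0)
  have quad_nonneg (ξ : Fin 3 → ℝ) : 0 ≤ ∑ i, ∑ j, A i j * ξ i * ξ j :=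
    (mul_nonneg hJ (Finset.sum_nonneg fun i _ => sq_nonneg (ξ i))).trans (hcoer ξ)
  have expand : -∑ i, (B * g i + 2 * β * X i) * (∑ j, A i j * g j - s * a i) =
      -(B * ∑ i, ∑ j, A i j * g i * g j) - 2 * β * ∑ i, ∑ j, A i j * X i * g j +
        ∑ i, a i * (s * B * g i + 2 * (s * β - b) * X i) + 2 * b * ∑ i, a i * X i := by
    simp only [Fin.sum_univ_three]
    ring
  have cross := neg_two_mul_mul_le_of_sq_le
    ((sum_sum_mul_sq_le hsymm quad_nonneg X g).trans_eq (mul_comm _ _)) hβ hB (quad_nonneg g)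
    (mul_nonneg hK hq) (quad_nonneg X)
  have cutoff_quad : K * q * ∑ i, ∑ j, A i j * X i * X j ≤ K * q * (9 * (N * d ^ 2)) := by
    gcongr
    exact (sum_sum_mul_mul_le hA hX).trans_eq (by norm_num)
  have cutoff_drift : b * ∑ i, a i * X i ≤ q * (3 * (N * d)) := by
    calc b * ∑ i, a i * X i ≤ b * (3 * (N * d)) := by
          gcongr
          exact (sum_mul_le ha hX).trans_eq (by norm_num)
      _ ≤ q * (3 * (N * d)) := by gcongr
  have coercive : B * (J * ∑ i, g i ^ 2) ≤ B * ∑ i, ∑ j, A i j * g i * g j := by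
    gcongr
    exact hcoer g
  rw [expand]
  linarith

/-- A compactly supported `C¹` function with values in `[0, 1]` and partial derivatives bounded by
`d`. -/
structure IsCutoff (d : ℝ) (χ : V3 → ℝ) : Prop where
  contDiff : ContDiff ℝ 1 χ
  hasCompactSupport : HasCompactSupport χ
  nonneg : ∀ v, 0 ≤ χ v
  le_one : ∀ v, χ v ≤ 1
  abs_pd_le : ∀ i v, |pd i χ v| ≤ d

/-- The flux `A[h] ∇h - h ∇a[h]`, whose divergence is the Landau collision operator. -/
def landauFlux (h : V3 → ℝ) (i : Fin 3) (v : V3) : ℝ :=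
  (∑ j : Fin 3, coeffA h v i j * pd j h v) - h v * pd i (coeffa h) v

/-- The integrand `⟨v⟩⁻³ (g - l)₊ ^ (p - 1) / ((g - l)₊ + ε) |∇g|²` of the dissipation produced by
`truncPow p ε l`; it tends to `4 / p² ⟨v⟩⁻³ |∇((g - l)₊ ^ (p / 2))|²` as `ε → 0`. -/
def truncDissipation (p ε l : ℝ) (g : V3 → ℝ) (v : V3) : ℝ :=
  max (g v - l) 0 ^ (p - 1) / (max (g v - l) 0 + ε) *
    (jap v ^ (-(3 : ℝ)) * ∑ i : Fin 3, pd i g v ^ 2)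

/-- The factor, of order `d`, of the error terms in which a cutoff function with gradient bounded
by `d` has been differentiated. -/
def cutoffConst (p d : ℝ) : ℝ := 18 * ((p + 1) ^ 2 / (p * (p - 1))) * d ^ 2 + 6 * d

lemma continuous_jap : Continuous jap := by
  unfold jap
  fun_prop

lemma IsCutoff.hasCompactSupport_sq {d : ℝ} {χ : V3 → ℝ} (hχ : IsCutoff d χ) :
    HasCompactSupport fun v => χ v ^ 2 :=
  hχ.hasCompactSupport.comp_left (g := fun x : ℝ => x ^ 2) (by simp)

lemma IsCutoff.sq_le_one {d : ℝ} {χ : V3 → ℝ} (hχ : IsCutoff d χ) (v : V3) : χ v ^ 2 ≤ 1 :=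
  pow_le_one₀ (hχ.nonneg v) (hχ.le_one v)

lemma IsCutoff.bound_nonneg {d : ℝ} {χ : V3 → ℝ} (hχ : IsCutoff d χ) : 0 ≤ d :=
  (abs_nonneg _).trans (hχ.abs_pd_le 0 0)

lemma cutoffConst_nonneg {p d : ℝ} (hp : 1 < p) (hd : 0 ≤ d) : 0 ≤ cutoffConst p d := by
  have := sub_pos.2 hp
  unfold cutoffConst
  positivity

lemma contDiff_one_of_hasDerivAt {β β' : ℝ → ℝ} (hβ : ∀ s, HasDerivAt β (β' s) s)
    (hβ' : Continuous β') : ContDiff ℝ 1 β := by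
  rw [contDiff_one_iff_deriv]
  exact ⟨fun s => (hβ s).differentiableAt, (funext fun s => (hβ s).deriv) ▸ hβ'⟩

lemma contDiff_landauFlux (h : 𝓢(V3, ℝ)) (i : Fin 3) : ContDiff ℝ 1 (landauFlux h i) := by
  have contDiff_pd (j : Fin 3) : ContDiff ℝ 1 (pd j h) :=
    (∂_{EuclideanSpace.single j (1 : ℝ)} h : 𝓢(V3, ℝ)).smooth 1
  exact (ContDiff.sum fun j _ => (contDiff_coeffA h i j).mul (contDiff_pd j)).sub
    ((h.smooth 1).mul (contDiff_pd_coeffa h i))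

lemma continuousOn_truncDissipation {X : Type*} [TopologicalSpace X] {p ε l : ℝ} (hp : 1 < p)
    (hε : 0 < ε) {g : X → V3 → ℝ} {w : X → V3} {s : Set X} (hw : ContinuousOn w s)
    (hg : ContinuousOn (fun x => g x (w x)) s)
    (hpd : ∀ i, ContinuousOn (fun x => pd i (g x) (w x)) s) :
    ContinuousOn (fun x => truncDissipation p ε l (g x) (w x)) s := by
  have ratio : Continuous fun s : ℝ => max (s - l) 0 ^ (p - 1) / (max (s - l) 0 + ε) := by
    refine (Continuous.rpow_const (by fun_prop) fun _ => Or.inr (by linarith)).div (by fun_prop)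
      fun s => ?_
    have := max_sub_zero_nonneg s l
    positivity
  have weight : Continuous fun v => jap v ^ (-(3 : ℝ)) :=
    continuous_jap.rpow_const fun v => Or.inl (jap_pos v).ne'
  exact (ratio.comp_continuousOn hg).mul
    ((weight.comp_continuousOn hw).mul (continuousOn_finsetSum _ fun i _ => (hpd i).pow 2))

lemma continuous_truncDissipation {p ε : ℝ} (hp : 1 < p) (hε : 0 < ε) (l : ℝ) {g : V3 → ℝ}
    (hg : ContDiff ℝ 1 g) : Continuous (truncDissipation p ε l g) := by
  rw [← continuousOn_univ]
  exact continuousOn_truncDissipation hp hε (g := fun _ => g) (w := id) continuousOn_id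
    hg.continuous.continuousOn fun i => (continuous_pd hg i).continuousOn

lemma truncDissipation_nonneg {ε : ℝ} (hε : 0 < ε) (p l : ℝ) (g : V3 → ℝ) (v : V3) :
    0 ≤ truncDissipation p ε l g v := by
  have := max_sub_zero_nonneg (g v) l
  have := jap_pos v
  unfold truncDissipation
  positivity

lemma pd_comp_mul_sq {g χ : V3 → ℝ} {β : ℝ → ℝ} {β' : ℝ} {v : V3} (hβ : HasDerivAt β β' (g v))
    (hg : DifferentiableAt ℝ g v) (hχ : DifferentiableAt ℝ χ v) (i : Fin 3) :
    pd i (fun w => β (g w) * χ w ^ 2) v =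
      β' * χ v ^ 2 * pd i g v + 2 * (β (g v) * χ v) * pd i χ v := by
  have hcomp : HasFDerivAt (fun w => β (g w)) (β' • fderiv ℝ g v) v :=
    hβ.comp_hasFDerivAt v hg.hasFDerivAt
  unfold pd
  rw [(hcomp.fun_mul (hχ.hasFDerivAt.pow 2)).fderiv]
  simp only [add_apply, smul_apply, smul_eq_mul]
  ring

section FixedTime

variable {p ε l c d : ℝ} {h : 𝓢(V3, ℝ)} {χ : V3 → ℝ}

lemma contDiff_truncPowDeriv_mul_sq (hp : 1 < p) (hε : 0 < ε) (hχ : IsCutoff d χ) :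
    ContDiff ℝ 1 fun v => truncPowDeriv p ε l (h v) * χ v ^ 2 :=
  ((contDiff_one_of_hasDerivAt (hasDerivAt_truncPowDeriv hp hε l)
    (continuous_truncPowDeriv₂ hp hε l)).comp (h.smooth 1)).mul (hχ.contDiff.pow 2)

lemma contDiff_mul_truncPowDeriv_sub_mul_sq (hp : 1 < p) (hε : 0 < ε) (hχ : IsCutoff d χ) :
    ContDiff ℝ 1 fun v =>
      (h v * truncPowDeriv p ε l (h v) - truncPow p ε l (h v)) * χ v ^ 2 :=
  ((contDiff_one_of_hasDerivAt (hasDerivAt_mul_truncPowDeriv_sub hp hε l)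
    (continuous_id.mul (continuous_truncPowDeriv₂ hp hε l))).comp (h.smooth 1)).mul
    (hχ.contDiff.pow 2)

lemma neg_sum_pd_truncPowDeriv_mul_landauFlux_le (hp : 1 < p) (hε : 0 < ε) (hc : 0 ≤ c)
    (h0 : ∀ v, 0 ≤ h v)
    (hcoer : ∀ v ξ : V3,
      c * jap v ^ (-(3 : ℝ)) * ‖ξ‖ ^ 2 ≤ ∑ i, ∑ j, coeffA h v i j * ξ i * ξ j)
    (hχ : IsCutoff d χ) (v : V3) :
    -∑ i, pd i (fun w => truncPowDeriv p ε l (h w) * χ w ^ 2) v * landauFlux h i v ≤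
      -(c / 2 * (p * (p - 1)) * (χ v ^ 2 * truncDissipation p ε l h v)) +
        (∑ i, pd i (coeffa h) v *
            pd i (fun w => (h w * truncPowDeriv p ε l (h w) - truncPow p ε l (h w)) * χ w ^ 2) v +
          cutoffConst p d * (max (h v - l) 0 ^ p * coeffBound h v)) := by
  have hp0 := zero_lt_one.trans hp
  have := sub_pos.2 hp
  have hh : DifferentiableAt ℝ h v := h.differentiableAt
  have hχv : DifferentiableAt ℝ χ v := hχ.contDiff.differentiable one_ne_zero v
  have hJ : 0 ≤ c * jap v ^ (-(3 : ℝ)) := mul_nonneg hc (rpow_nonneg (jap_pos v).le _)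
  have flux_bound := neg_sum_mul_flux_le (A := coeffA h v) (g := fun i => pd i h v)
    (a := fun i => pd i (coeffa h) v) (X := fun i => pd i χ v) (s := h v)
    (b := truncPow p ε l (h v) * χ v) (β := truncPowDeriv p ε l (h v) * χ v)
    (B := truncPowDeriv₂ p ε l (h v) * χ v ^ 2) (J := c * jap v ^ (-(3 : ℝ)))
    (K := (p + 1) ^ 2 / (p * (p - 1))) (q := max (h v - l) 0 ^ p)
    (coeffA_symm h v)
    (fun ξ => by simpa [EuclideanSpace.real_norm_sq_eq] using hcoer v (WithLp.toLp 2 ξ))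
    (abs_coeffA_le_coeffBound h0 v) (abs_pd_coeffa_le_coeffBound h0 v)
    (fun i => hχ.abs_pd_le i v) hJ (by positivity)
    (mul_nonneg (truncPowDeriv₂_nonneg hp hε l _) (sq_nonneg _))
    (mul_nonneg (truncPow_nonneg hε l _) (hχ.nonneg v))
    ((mul_le_of_le_one_right (truncPow_nonneg hε l _) (hχ.le_one v)).trans
      (truncPow_le hp0 hε l _))
    (by
      rw [mul_pow, ← mul_assoc]
      exact mul_le_mul_of_nonneg_right (truncPowDeriv_sq_le hp hε l _) (sq_nonneg _))
  have dissipation_le := mul_le_mul_of_nonneg_right (le_truncPowDeriv₂ hp hε l (h v))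
    (mul_nonneg (sq_nonneg (χ v))
      (mul_nonneg hJ (Finset.univ.sum_nonneg fun i _ => sq_nonneg (pd i h v))))
  have drift_eq (i : Fin 3) :
      h v * (truncPowDeriv₂ p ε l (h v) * χ v ^ 2) * pd i h v +
          2 * (h v * (truncPowDeriv p ε l (h v) * χ v) - truncPow p ε l (h v) * χ v) * pd i χ v =
        h v * truncPowDeriv₂ p ε l (h v) * χ v ^ 2 * pd i h v +
          2 * ((h v * truncPowDeriv p ε l (h v) - truncPow p ε l (h v)) * χ v) * pd i χ v := by
    ring
  simp only [drift_eq] at flux_bound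
  simp only [pd_comp_mul_sq (hasDerivAt_truncPowDeriv hp hε l (h v)) hh hχv,
    pd_comp_mul_sq (hasDerivAt_mul_truncPowDeriv_sub hp hε l (h v)) hh hχv]
  unfold truncDissipation landauFlux cutoffConst
  refine flux_bound.trans ?_
  gcongr ?_ + _
  linarith

lemma integral_mul_mul_truncPowDeriv_sub_mul_sq_le (hp : 1 < p) (hε : 0 < ε) (h0 : ∀ v, 0 ≤ h v)
    {k : ℝ} (hk : 0 < k) (hkl : k < l) (hχ : IsCutoff d χ) :
    ∫ v, h v * ((h v * truncPowDeriv p ε l (h v) - truncPow p ε l (h v)) * χ v ^ 2) ≤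
      (p + 1) * (2 + 2 * (l ^ 2 / (l - k) ^ 2)) * ∫ v, max (h v - k) 0 ^ (p + 1) := by
  rw [← integral_const_mul]
  refine integral_mono ((h.continuous.mul
    (contDiff_mul_truncPowDeriv_sub_mul_sq hp hε hχ).continuous).integrable_of_hasCompactSupport
      hχ.hasCompactSupport_sq.mul_left.mul_left)
    ((integrable_max_sub_zero_rpow h hk (by linarith)).const_mul _) fun v => ?_
  have := max_sub_zero_nonneg (h v) k
  calc h v * ((h v * truncPowDeriv p ε l (h v) - truncPow p ε l (h v)) * χ v ^ 2)
      = h v * (h v * truncPowDeriv p ε l (h v) - truncPow p ε l (h v)) * χ v ^ 2 := by ring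
    _ ≤ (p + 1) * (2 + 2 * (l ^ 2 / (l - k) ^ 2)) * max (h v - k) 0 ^ (p + 1) * χ v ^ 2 :=
        mul_le_mul_of_nonneg_right (mul_mul_truncPowDeriv_sub_le hp hε (h0 v) hk hkl)
          (sq_nonneg _)
    _ ≤ _ := mul_le_of_le_one_right (by positivity) (hχ.sq_le_one v)

lemma integral_truncPowDeriv_mul_divergence_le (hp : 1 < p) (hε : 0 < ε) (hc : 0 ≤ c)
    (h0 : ∀ v, 0 ≤ h v) (hl : 0 < l)
    (hcoer : ∀ v ξ : V3,
      c * jap v ^ (-(3 : ℝ)) * ‖ξ‖ ^ 2 ≤ ∑ i, ∑ j, coeffA h v i j * ξ i * ξ j)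
    (hχ : IsCutoff d χ) :
    ∫ v, truncPowDeriv p ε l (h v) * χ v ^ 2 * ∑ i, pd i (landauFlux h i) v ≤
      -(c / 2 * (p * (p - 1)) * ∫ v, χ v ^ 2 * truncDissipation p ε l h v) +
        ((∫ v, h v * ((h v * truncPowDeriv p ε l (h v) - truncPow p ε l (h v)) * χ v ^ 2)) +
          cutoffConst p d * ∫ v, max (h v - l) 0 ^ p * coeffBound h v) := by
  have hp0 := zero_lt_one.trans hp
  have hψ := contDiff_truncPowDeriv_mul_sq (l := l) (h := h) hp hε hχ
  have hΨ := contDiff_mul_truncPowDeriv_sub_mul_sq (l := l) (h := h) hp hε hχ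
  have hψc : HasCompactSupport fun v => truncPowDeriv p ε l (h v) * χ v ^ 2 :=
    hχ.hasCompactSupport_sq.mul_left
  have hΨc : HasCompactSupport fun v =>
      (h v * truncPowDeriv p ε l (h v) - truncPow p ε l (h v)) * χ v ^ 2 :=
    hχ.hasCompactSupport_sq.mul_left
  have flux_integrable : Integrable fun v =>
      -∑ i, pd i (fun w => truncPowDeriv p ε l (h w) * χ w ^ 2) v * landauFlux h i v :=
    (integrable_finsetSum _ fun i _ => ((continuous_pd hψ i).mul
      (contDiff_landauFlux h i).continuous).integrable_of_hasCompactSupport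
        (hasCompactSupport_pd hψc i).mul_right).neg
  have dissipation_integrable : Integrable fun v =>
      -(c / 2 * (p * (p - 1)) * (χ v ^ 2 * truncDissipation p ε l h v)) :=
    ((((hχ.contDiff.continuous.pow 2).mul
      (continuous_truncDissipation hp hε l (h.smooth 1))).integrable_of_hasCompactSupport
        hχ.hasCompactSupport_sq.mul_right).const_mul _).neg
  have drift_integrable : Integrable fun v => ∑ i, pd i (coeffa h) v *
      pd i (fun w => (h w * truncPowDeriv p ε l (h w) - truncPow p ε l (h w)) * χ w ^ 2) v :=
    integrable_finsetSum _ fun i _ => ((contDiff_pd_coeffa h i).continuous.mul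
      (continuous_pd hΨ i)).integrable_of_hasCompactSupport (hasCompactSupport_pd hΨc i).mul_left
  have error_integrable : Integrable fun v =>
      cutoffConst p d * (max (h v - l) 0 ^ p * coeffBound h v) :=
    (((continuous_max_sub_zero_rpow h l hp0).mul
      (continuous_coeffBound h)).integrable_of_hasCompactSupport
        (hasCompactSupport_max_sub_zero_rpow h hl hp0).mul_right).const_mul _
  rw [integral_mul_sum_pd hψ hψc (contDiff_landauFlux h), ← integral_neg,
    ← integral_sum_pd_coeffa_mul_pd h hΨ hΨc, ← integral_const_mul, ← integral_const_mul,
    ← integral_neg, ← integral_add drift_integrable error_integrable,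
    ← integral_add dissipation_integrable (by exact drift_integrable.add error_integrable)]
  exact integral_mono flux_integrable
    (dissipation_integrable.add (drift_integrable.add error_integrable))
    (neg_sum_pd_truncPowDeriv_mul_landauFlux_le hp hε hc h0 hcoer hχ)

/-- The growth factor in the energy inequality for a solution truncated at level `l`, tested
against a cutoff function with gradient bounded by `d`. -/
def energyGrowthConst (p d k l : ℝ) : ℝ :=
  (p + 1) * (2 + 2 * (l ^ 2 / (l - k) ^ 2)) + cutoffConst p d * coeffBoundConst k l

lemma energyGrowthConst_nonneg {k : ℝ} (hp : 1 < p) (hd : 0 ≤ d) (hk : 0 ≤ k) (hkl : k < l) :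
    0 ≤ energyGrowthConst p d k l := by
  have := cutoffConst_nonneg hp hd
  have := coeffBoundConst_nonneg hk hkl
  unfold energyGrowthConst
  positivity

lemma integral_truncPowDeriv_mul_divergence_add_dissipation_le (hp : 1 < p) (hε : 0 < ε)
    (hc : 0 ≤ c) (h0 : ∀ v, 0 ≤ h v) (h1 : ∫ v, h v = 1)
    (hcoer : ∀ v ξ : V3,
      c * jap v ^ (-(3 : ℝ)) * ‖ξ‖ ^ 2 ≤ ∑ i, ∑ j, coeffA h v i j * ξ i * ξ j)
    {k : ℝ} (hk : 0 < k) (hkl : k < l) (hχ : IsCutoff d χ) :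
    (∫ v, truncPowDeriv p ε l (h v) * χ v ^ 2 * ∑ i, pd i (landauFlux h i) v) +
        c / 2 * (p * (p - 1)) * ∫ v, χ v ^ 2 * truncDissipation p ε l h v ≤
      energyGrowthConst p d k l * ∫ v, max (h v - k) 0 ^ (p + 1) := by
  have divergence := integral_truncPowDeriv_mul_divergence_le hp hε hc h0 (hk.trans hkl) hcoer hχ
  have drift := integral_mul_mul_truncPowDeriv_sub_mul_sq_le hp hε h0 hk hkl hχ
  have cutoff_error := mul_le_mul_of_nonneg_left
    (integral_max_sub_zero_rpow_mul_coeffBound_le h0 h1 (zero_lt_one.trans hp) hk hkl)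
    (cutoffConst_nonneg hp hχ.bound_nonneg)
  unfold energyGrowthConst
  linarith

end FixedTime

/-! ### Functions of time and space -/

lemma exists_isCutoff : ∃ d : ℝ, ∀ n : ℕ, ∃ χ : V3 → ℝ,
    IsCutoff (d / (n + 1)) χ ∧ ∀ v, ‖v‖ ≤ n + 1 → χ v = 1 := by
  let b : ContDiffBump (0 : V3) := ⟨1, 2, one_pos, one_lt_two⟩
  have hb : ContDiff ℝ 1 b := b.contDiff
  have pd_bounded (i : Fin 3) : ∃ C, ∀ v, ‖pd i b v‖ ≤ C :=
    (continuous_pd hb i).bounded_above_of_compact_support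
      (hasCompactSupport_pd b.hasCompactSupport i)
  choose C hC using pd_bounded
  refine ⟨∑ i, C i, fun n => ?_⟩
  set r : ℝ := ((n : ℝ) + 1)⁻¹
  have r_pos : 0 < r := by positivity
  have pd_scaled (i : Fin 3) (v : V3) : pd i (fun v => b (r • v)) v = r * pd i b (r • v) := by
    have hscale : HasFDerivAt (fun v : V3 => r • v) (r • ContinuousLinearMap.id ℝ V3) v :=
      (hasFDerivAt_id v).const_smul r
    have hcomp : HasFDerivAt (fun v => b (r • v)) _ v :=
      ((hb.differentiable one_ne_zero _).hasFDerivAt).comp v hscale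
    simp [pd, hcomp.fderiv]
  refine ⟨fun v => b (r • v), ⟨hb.comp (contDiff_const_smul r),
    b.hasCompactSupport.comp_homeomorph (Homeomorph.smulOfNeZero r r_pos.ne'),
    fun v => b.nonneg, fun v => b.le_one, fun i v => ?_⟩, fun v hv => ?_⟩
  · rw [pd_scaled, abs_mul, abs_of_pos r_pos, div_eq_inv_mul]
    gcongr
    exact (hC i _).trans (Finset.single_le_sum
      (fun j _ => (norm_nonneg _).trans (hC j 0)) (Finset.mem_univ i))
  · apply b.one_of_mem_closedBall
    rw [mem_closedBall_zero_iff, norm_smul, norm_of_nonneg r_pos.le]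
    exact (inv_mul_le_one₀ (by positivity)).2 hv

lemma continuous_slice {X Y Z : Type*} [TopologicalSpace X] [TopologicalSpace Y]
    [TopologicalSpace Z] {g : X × Y → Z} {I : Set X} (hg : ContinuousOn g (I ×ˢ univ)) {x : X}
    (hx : x ∈ I) : Continuous fun y => g (x, y) :=
  hg.comp_continuous (by fun_prop) fun y => ⟨hx, mem_univ y⟩

section SpaceTime

variable {E : Type*} [NormedAddCommGroup E] [NormedSpace ℝ E] {f : ℝ → E → ℝ} {I : Set ℝ}
  (hI : IsOpen I) (hf : ContDiffOn ℝ 1 (Function.uncurry f) (I ×ˢ univ))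
include hI hf

lemma hasFDerivAt_uncurry {t : ℝ} (ht : t ∈ I) (v : E) :
    HasFDerivAt (Function.uncurry f) (fderiv ℝ (Function.uncurry f) (t, v)) (t, v) :=
  ((hf.differentiableOn one_ne_zero).differentiableAt
    ((hI.prod isOpen_univ).mem_nhds ⟨ht, mem_univ v⟩)).hasFDerivAt

lemma hasDerivAt_time {t : ℝ} (ht : t ∈ I) (v : E) :
    HasDerivAt (fun s => f s v) (fderiv ℝ (Function.uncurry f) (t, v) (1, 0)) t :=
  HasFDerivAt.comp_hasDerivAt (f := fun s => (s, v)) t (hasFDerivAt_uncurry hI hf ht v)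
    ((hasDerivAt_id t).prodMk (hasDerivAt_const t v))

lemma hasFDerivAt_space {t : ℝ} (ht : t ∈ I) (v : E) :
    HasFDerivAt (f t)
      ((fderiv ℝ (Function.uncurry f) (t, v)).comp (ContinuousLinearMap.inr ℝ ℝ E)) v :=
  (hasFDerivAt_uncurry hI hf ht v).comp v ((hasFDerivAt_const t v).prodMk (hasFDerivAt_id v))

lemma continuousOn_fderiv_uncurry_apply (w : ℝ × E) :
    ContinuousOn (fun q => fderiv ℝ (Function.uncurry f) q w) (I ×ˢ univ) :=
  (hf.continuousOn_fderiv_of_isOpen (hI.prod isOpen_univ) le_rfl).clm_apply continuousOn_const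

lemma hasDerivAt_integral_comp_mul [MeasurableSpace E] [BorelSpace E] {μ : Measure E}
    [IsFiniteMeasureOnCompacts μ] {β β' : ℝ → ℝ} (hβ : ∀ s, HasDerivAt β (β' s) s)
    (hβ' : Continuous β') {ω : E → ℝ} (hω : Continuous ω) (hωc : HasCompactSupport ω) {t : ℝ}
    (ht : t ∈ I) :
    HasDerivAt (fun s => ∫ v, β (f s v) * ω v ∂μ)
      (∫ v, β' (f t v) * ω v * deriv (fun s => f s v) t ∂μ) t := by
  have hβc : Continuous β := continuous_iff_continuousAt.2 fun s => (hβ s).continuousAt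
  let F : ℝ × E → ℝ := fun q => β (f q.1 q.2) * ω q.2
  let F' : ℝ × E → ℝ := fun q =>
    β' (f q.1 q.2) * ω q.2 * fderiv ℝ (Function.uncurry f) q (1, 0)
  have hF : ContinuousOn F (I ×ˢ univ) :=
    (hβc.comp_continuousOn hf.continuousOn).mul (by fun_prop)
  have hF' : ContinuousOn F' (I ×ˢ univ) :=
    ((hβ'.comp_continuousOn hf.continuousOn).mul (by fun_prop)).mul
      (continuousOn_fderiv_uncurry_apply hI hf _)
  obtain ⟨r, hr, ball_subset⟩ := Metric.nhds_basis_closedBall.mem_iff.1 (hI.mem_nhds ht)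
  obtain ⟨B, hB⟩ := ((isCompact_closedBall t r).prod hωc).exists_bound_of_continuousOn
    (hF'.mono (prod_mono ball_subset (subset_univ _)))
  have F'_le (v : E) (s : ℝ) (hs : s ∈ Metric.closedBall t r) :
      ‖F' (s, v)‖ ≤ (tsupport ω).indicator (fun _ => |B|) v := by
    by_cases hv : v ∈ tsupport ω
    · rw [indicator_of_mem hv]
      exact (hB (s, v) ⟨hs, hv⟩).trans (le_abs_self B)
    · simp [F', indicator_of_notMem hv, image_eq_zero_of_notMem_tsupport hv]
  have bound_integrable : Integrable ((tsupport ω).indicator fun _ => |B|) μ := by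
    rw [integrable_indicator_iff (isClosed_tsupport ω).measurableSet]
    exact integrableOn_const (IsCompact.measure_lt_top hωc).ne
  have hasDerivAt_F (v : E) (s : ℝ) (hs : s ∈ Metric.closedBall t r) :
      HasDerivAt (fun s => F (s, v)) (F' (s, v)) s :=
    (((hβ (f s v)).comp s (hasDerivAt_time hI hf (ball_subset hs) v)).mul_const (ω v)).congr_deriv
      (by ring)
  refine (hasDerivAt_integral_of_dominated_loc_of_deriv_le (F := fun s v => F (s, v))
    (Metric.closedBall_mem_nhds t hr)
    (eventually_of_mem (hI.mem_nhds ht) fun s hs => (continuous_slice hF hs).aestronglyMeasurable)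
    ((continuous_slice hF ht).integrable_of_hasCompactSupport hωc.mul_left)
    (continuous_slice hF' ht).aestronglyMeasurable (ae_of_all _ F'_le) bound_integrable
    (ae_of_all _ hasDerivAt_F)).2.congr_deriv ?_
  simp only [F', (hasDerivAt_time hI hf ht _).deriv]

end SpaceTime

lemma aestronglyMeasurable_integral_slice {X E : Type*} [TopologicalSpace X] [MeasurableSpace X]
    [OpensMeasurableSpace X] [TopologicalSpace E] [MeasurableSpace E]
    [OpensMeasurableSpace E] [SecondCountableTopology E] {ν : Measure X} {μ : Measure E}
    [SFinite ν] [SFinite μ] {g : X × E → ℝ} {I : Set X} (hI : MeasurableSet I)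
    (hg : ContinuousOn g (I ×ˢ univ)) :
    AEStronglyMeasurable (fun t => ∫ v, g (t, v) ∂μ) (ν.restrict I) := by
  have hprod := hg.aestronglyMeasurable (μ := ν.prod μ) (hI.prod MeasurableSet.univ)
  rw [← Measure.prod_restrict, Measure.restrict_univ] at hprod
  exact hprod.integral_prod_right'

lemma exists_mem_Ioo_le_inv_mul_setIntegral {a b : ℝ} (hab : a < b) {Y : ℝ → ℝ}
    (hY : IntegrableOn Y (Ioo a b)) : ∃ s ∈ Ioo a b, Y s ≤ (b - a)⁻¹ * ∫ τ in Ioo a b, Y τ := by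
  obtain ⟨s, hs, hYs⟩ := exists_le_setAverage (by simp [hab]) (by simp) hY
  rw [setAverage_eq, volume_real_Ioo_of_le hab.le] at hYs
  exact ⟨s, hs, hYs⟩

section DifferentialInequality

variable {E E' D Y : ℝ → ℝ} {b c K : ℝ}

lemma add_integral_le_of_hasDerivAt {s t : ℝ} (hst : s ≤ t)
    (hE : ∀ τ ∈ Icc s t, HasDerivAt E (E' τ) τ) (hE' : ∀ τ ∈ Icc s t, E' τ + c * D τ ≤ K * Y τ)
    (hD : IntervalIntegrable D volume s t) (hY : IntervalIntegrable Y volume s t) :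
    E t + c * ∫ τ in s..t, D τ ≤ E s + K * ∫ τ in s..t, Y τ := by
  have growth := intervalIntegral.sub_le_integral_of_hasDeriv_right_of_le
    (φ := fun τ => K * Y τ - c * D τ) hst
    (fun τ hτ => (hE τ hτ).continuousAt.continuousWithinAt)
    (fun τ hτ => (hE τ (Ioo_subset_Icc_self hτ)).hasDerivWithinAt)
    ((intervalIntegrable_iff_integrableOn_Icc_of_le hst).1
      ((hY.const_mul K).sub (hD.const_mul c)))
    fun τ hτ => le_sub_iff_add_le.2 (hE' τ (Ioo_subset_Icc_self hτ))
  rw [intervalIntegral.integral_sub (hY.const_mul K) (hD.const_mul c),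
    intervalIntegral.integral_const_mul, intervalIntegral.integral_const_mul] at growth
  linarith

/- The initial time is chosen in `(T₁, T₂)` so that `Y`, hence `E`, is at most its average there. -/
lemma add_integral_le_of_le_mul {T₁ T₂ T₃ : ℝ} (hT₁₂ : T₁ < T₂)
    (hE : ∀ τ ∈ Ioo T₁ T₃, HasDerivAt E (E' τ) τ)
    (hE' : ∀ τ ∈ Ioo T₁ T₃, E' τ + c * D τ ≤ K * Y τ) (hEY : ∀ τ ∈ Ioo T₁ T₃, E τ ≤ b * Y τ)
    (hb : 0 ≤ b) (hc : 0 ≤ c) (hK : 0 ≤ K) (hD0 : ∀ τ, 0 ≤ D τ) (hD : ContinuousOn D (Ioo T₁ T₃))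
    (hY0 : ∀ τ, 0 ≤ Y τ) (hY : IntegrableOn Y (Ioo T₁ T₃)) {t : ℝ} (ht : t ∈ Ioo T₂ T₃) :
    E t + c * ∫ τ in T₂..t, D τ ≤ (b * (T₂ - T₁)⁻¹ + K) * ∫ τ in Ioo T₁ T₃, Y τ := by
  have setIntegral_le {S : Set ℝ} (hS : S ⊆ Ioo T₁ T₃) :
      ∫ τ in S, Y τ ≤ ∫ τ in Ioo T₁ T₃, Y τ :=
    setIntegral_mono_set hY (ae_of_all _ hY0) hS.eventuallyLE
  have Ioo_subset : Ioo T₁ T₂ ⊆ Ioo T₁ T₃ := Ioo_subset_Ioo_right (ht.1.trans ht.2).le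
  obtain ⟨s, hs, hYs⟩ := exists_mem_Ioo_le_inv_mul_setIntegral hT₁₂ (hY.mono_set Ioo_subset)
  have hst : s ≤ t := (hs.2.trans ht.1).le
  have Icc_subset : Icc s t ⊆ Ioo T₁ T₃ := Icc_subset_Ioo hs.1 ht.2
  have D_integrable : IntervalIntegrable D volume s t :=
    (hD.mono (uIcc_of_le hst ▸ Icc_subset)).intervalIntegrable
  have Y_integrable : IntervalIntegrable Y volume s t :=
    (intervalIntegrable_iff_integrableOn_Icc_of_le hst).2 (hY.mono_set Icc_subset)
  have initial : E s ≤ b * ((T₂ - T₁)⁻¹ * ∫ τ in Ioo T₁ T₃, Y τ) := by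
    refine (hEY s (Ioo_subset hs)).trans ?_
    have := sub_pos.2 hT₁₂
    gcongr
    exact hYs.trans (mul_le_mul_of_nonneg_left (setIntegral_le Ioo_subset) (by positivity))
  calc E t + c * ∫ τ in T₂..t, D τ ≤ E t + c * ∫ τ in s..t, D τ := by
        gcongr
        exact intervalIntegral.integral_mono_interval hs.2.le ht.1.le le_rfl
          (ae_of_all _ hD0) D_integrable
    _ ≤ E s + K * ∫ τ in s..t, Y τ :=
        add_integral_le_of_hasDerivAt hst (fun τ hτ => hE τ (Icc_subset hτ))
          (fun τ hτ => hE' τ (Icc_subset hτ)) D_integrable Y_integrable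
    _ ≤ b * ((T₂ - T₁)⁻¹ * ∫ τ in Ioo T₁ T₃, Y τ) + K * ∫ τ in Ioo T₁ T₃, Y τ := by
        gcongr
        rw [intervalIntegral.integral_of_le hst]
        exact setIntegral_le (Ioc_subset_Icc_self.trans Icc_subset)
    _ = _ := by ring

end DifferentialInequality

/-! ### The energy inequality in time -/

/-- A classical solution of the Landau–Coulomb equation on the open time interval `(0, T)`, `C¹` in
time and velocity and Schwartz in velocity, all of whose states have unit mass, energy at most `3`
and entropy at most `M`. -/
structure IsLandauSolution (M T : ℝ) (f : ℝ → V3 → ℝ) : Prop where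
  contDiffOn : ContDiffOn ℝ 1 (Function.uncurry f) (Ioo 0 T ×ˢ univ)
  isSchwartz : ∀ t ∈ Ioo 0 T, IsSchwartz (f t)
  landauEqAt : ∀ t ∈ Ioo 0 T, ∀ v, LandauEqAt f t v
  isLandauState : ∀ t ∈ Ioo 0 T, IsLandauState M (f t)

/-- The weighted squared gradient `⟨v⟩⁻³ |∇((g - l)₊ ^ (p / 2))|²`. -/
def dissipationAbove (p l : ℝ) (g : V3 → ℝ) (v : V3) : ℝ :=
  jap v ^ (-(3 : ℝ)) * ∑ i : Fin 3, (pd i (fun w => max (g w - l) 0 ^ (p / 2)) v) ^ 2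

/-- The energy `𝓔_l(T₂, T₃)` of the part of `f` above the level `l`. -/
def energyAbove (p l : ℝ) (f : ℝ → V3 → ℝ) (T₂ T₃ : ℝ) : ENNReal :=
  (⨆ t ∈ Ioo T₂ T₃, ∫⁻ v : V3, ENNReal.ofReal (max (f t v - l) 0 ^ p)) +
    ∫⁻ t in Ioo T₂ T₃, ∫⁻ v : V3, ENNReal.ofReal (dissipationAbove p l (f t) v)

/-- The space-time integral `𝓐_k(T₁, T₃)` of `(f - k)₊ ^ (p + 1)`. -/
def powerAbove (p k : ℝ) (f : ℝ → V3 → ℝ) (T₁ T₃ : ℝ) : ENNReal :=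
  ∫⁻ t in Ioo T₁ T₃, ∫⁻ v : V3, ENNReal.ofReal (max (f t v - k) 0 ^ (p + 1))

namespace IsLandauSolution

variable {M T : ℝ} {f : ℝ → V3 → ℝ} (hf : IsLandauSolution M T f) {p k l : ℝ}
include hf

lemma contDiff {t : ℝ} (ht : t ∈ Ioo 0 T) : ContDiff ℝ 1 (f t) := by
  obtain ⟨h, hh⟩ := hf.isSchwartz t ht
  exact hh ▸ h.smooth 1

lemma pd_eq {t : ℝ} (ht : t ∈ Ioo 0 T) (i : Fin 3) (v : V3) :
    pd i (f t) v = fderiv ℝ (Function.uncurry f) (t, v) (0, EuclideanSpace.single i 1) := by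
  simp [pd, (hasFDerivAt_space isOpen_Ioo hf.contDiffOn ht v).fderiv]

lemma continuousOn_integral_truncDissipation {ε d : ℝ} (hp : 1 < p) (hε : 0 < ε) {χ : V3 → ℝ}
    (hχ : IsCutoff d χ) :
    ContinuousOn (fun t => ∫ v, χ v ^ 2 * truncDissipation p ε l (f t) v) (Ioo 0 T) := by
  have := hχ.contDiff.continuous
  have pd_continuousOn (i : Fin 3) :
      ContinuousOn (fun q : ℝ × V3 => pd i (f q.1) q.2) (Ioo 0 T ×ˢ univ) :=
    (continuousOn_fderiv_uncurry_apply isOpen_Ioo hf.contDiffOn _).congr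
      fun q hq => hf.pd_eq hq.1 i q.2
  refine continuousOn_integral_of_compact_support hχ.hasCompactSupport
    (ContinuousOn.mul (by fun_prop) (continuousOn_truncDissipation hp hε (by fun_prop)
      hf.contDiffOn.continuousOn pd_continuousOn)) fun t v _ hv => ?_
  simp [image_eq_zero_of_notMem_tsupport hv]

lemma lintegral_max_sub_zero_rpow {r t : ℝ} (hk : 0 < k) (hr : 0 < r) (ht : t ∈ Ioo 0 T) :
    ∫⁻ v, ENNReal.ofReal (max (f t v - k) 0 ^ r) =
      ENNReal.ofReal (∫ v, max (f t v - k) 0 ^ r) := by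
  obtain ⟨h, hh⟩ := hf.isSchwartz t ht
  rw [ofReal_integral_eq_lintegral_ofReal (hh ▸ integrable_max_sub_zero_rpow h hk hr)
    (ae_of_all _ fun v => rpow_nonneg (max_sub_zero_nonneg _ _) _)]

lemma integral_truncPow_mul_sq_le {ε d t : ℝ} (hp : 0 < p) (hε : 0 < ε) (hk : 0 < k) (hkl : k < l)
    {χ : V3 → ℝ} (hχ : IsCutoff d χ) (ht : t ∈ Ioo 0 T) :
    ∫ v, truncPow p ε l (f t v) * χ v ^ 2 ≤ (l - k)⁻¹ * ∫ v, max (f t v - k) 0 ^ (p + 1) := by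
  obtain ⟨h, hh⟩ := hf.isSchwartz t ht
  rw [← integral_const_mul, ← hh]
  refine integral_mono_of_nonneg
    (ae_of_all _ fun v => mul_nonneg (truncPow_nonneg hε l _) (sq_nonneg _))
    ((integrable_max_sub_zero_rpow h hk (by positivity)).const_mul _) (ae_of_all _ fun v => ?_)
  calc truncPow p ε l (h v) * χ v ^ 2 ≤ truncPow p ε l (h v) :=
        mul_le_of_le_one_right (truncPow_nonneg hε l _) (hχ.sq_le_one v)
    _ ≤ max (h v - l) 0 ^ p := truncPow_le hp hε l _
    _ ≤ _ := max_sub_zero_rpow_le hp hkl _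

lemma hasDerivAt_integral_truncPow_mul_sq {ε d t : ℝ} (hp : 1 < p) (hε : 0 < ε) {χ : V3 → ℝ}
    (hχ : IsCutoff d χ) (ht : t ∈ Ioo 0 T) :
    HasDerivAt (fun s => ∫ v, truncPow p ε l (f s v) * χ v ^ 2)
      (∫ v, truncPowDeriv p ε l (f t v) * χ v ^ 2 * ∑ i, pd i (landauFlux (f t) i) v) t := by
  refine (hasDerivAt_integral_comp_mul isOpen_Ioo hf.contDiffOn
    (hasDerivAt_truncPow (zero_lt_one.trans hp) hε l)
    (continuous_iff_continuousAt.2 fun s => (hasDerivAt_truncPowDeriv hp hε l s).continuousAt)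
    (hχ.contDiff.continuous.pow 2) hχ.hasCompactSupport_sq ht).congr_deriv ?_
  exact integral_congr_ae (ae_of_all _ fun v => congrArg _ (hf.landauEqAt t ht v))

variable {T₁ T₃ : ℝ} (hT₁ : 0 ≤ T₁) (hT₃ : T₃ ≤ T)
include hT₁ hT₃

lemma powerAbove_eq (hp : 0 < p) (hk : 0 < k) : powerAbove p k f T₁ T₃ =
    ∫⁻ t in Ioo T₁ T₃, ENNReal.ofReal (∫ v, max (f t v - k) 0 ^ (p + 1)) :=
  setLIntegral_congr_fun measurableSet_Ioo fun _ ht =>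
    hf.lintegral_max_sub_zero_rpow hk (by positivity) (Ioo_subset_Ioo hT₁ hT₃ ht)

lemma aestronglyMeasurable_integral_max_sub_zero_rpow {r : ℝ} (hr : 0 < r) :
    AEStronglyMeasurable (fun t => ∫ v, max (f t v - k) 0 ^ r) (volume.restrict (Ioo T₁ T₃)) := by
  have pow_continuous : Continuous fun s : ℝ => max (s - k) 0 ^ r :=
    Continuous.rpow_const (by fun_prop) fun _ => Or.inr hr.le
  exact aestronglyMeasurable_integral_slice measurableSet_Ioo (pow_continuous.comp_continuousOn
    (hf.contDiffOn.continuousOn.mono (prod_mono (Ioo_subset_Ioo hT₁ hT₃) le_rfl)))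

lemma integrableOn_integral_max_sub_zero_rpow (hp : 0 < p) (hk : 0 < k)
    (hA : powerAbove p k f T₁ T₃ ≠ ⊤) :
    IntegrableOn (fun t => ∫ v, max (f t v - k) 0 ^ (p + 1)) (Ioo T₁ T₃) := by
  refine ⟨hf.aestronglyMeasurable_integral_max_sub_zero_rpow hT₁ hT₃ (by positivity), ?_⟩
  rw [hasFiniteIntegral_iff_ofReal (ae_of_all _ fun t => integral_nonneg fun v =>
    rpow_nonneg (max_sub_zero_nonneg _ _) _), ← hf.powerAbove_eq hT₁ hT₃ hp hk]
  exact hA.lt_top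

lemma toReal_powerAbove (hp : 0 < p) (hk : 0 < k) : (powerAbove p k f T₁ T₃).toReal =
    ∫ t in Ioo T₁ T₃, ∫ v, max (f t v - k) 0 ^ (p + 1) := by
  rw [hf.powerAbove_eq hT₁ hT₃ hp hk, integral_eq_lintegral_of_nonneg_ae
    (ae_of_all _ fun t => integral_nonneg fun v => rpow_nonneg (max_sub_zero_nonneg _ _) _)
    (hf.aestronglyMeasurable_integral_max_sub_zero_rpow hT₁ hT₃ (by positivity))]

lemma integral_truncPow_add_integral_dissipation_le {c ε d t T₂ : ℝ} (hp : 1 < p) (hε : 0 < ε)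
    (hc : 0 ≤ c) (hcoer : ∀ t ∈ Ioo 0 T, ∀ v ξ : V3,
      c * jap v ^ (-(3 : ℝ)) * ‖ξ‖ ^ 2 ≤ ∑ i, ∑ j, coeffA (f t) v i j * ξ i * ξ j)
    (hk : 0 < k) (hkl : k < l) {χ : V3 → ℝ} (hχ : IsCutoff d χ) (hT₁₂ : T₁ < T₂)
    (hA : powerAbove p k f T₁ T₃ ≠ ⊤) (ht : t ∈ Ioo T₂ T₃) :
    (∫ v, truncPow p ε l (f t v) * χ v ^ 2) + c / 2 * (p * (p - 1)) *
        ∫ τ in T₂..t, ∫ v, χ v ^ 2 * truncDissipation p ε l (f τ) v ≤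
      (1 / ((T₂ - T₁) * (l - k)) + energyGrowthConst p d k l) *
        (powerAbove p k f T₁ T₃).toReal := by
  have hp0 := zero_lt_one.trans hp
  have := sub_pos.2 hp
  have := sub_pos.2 hkl
  have Ioo_subset : Ioo T₁ T₃ ⊆ Ioo 0 T := Ioo_subset_Ioo hT₁ hT₃
  have fixed_time (τ : ℝ) (hτ : τ ∈ Ioo T₁ T₃) :
      (∫ v, truncPowDeriv p ε l (f τ v) * χ v ^ 2 * ∑ i, pd i (landauFlux (f τ) i) v) +
          c / 2 * (p * (p - 1)) * ∫ v, χ v ^ 2 * truncDissipation p ε l (f τ) v ≤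
        energyGrowthConst p d k l * ∫ v, max (f τ v - k) 0 ^ (p + 1) := by
    have state := hf.isLandauState τ (Ioo_subset hτ)
    have coercive := hcoer τ (Ioo_subset hτ)
    obtain ⟨h, hh⟩ := hf.isSchwartz τ (Ioo_subset hτ)
    rw [← hh] at state coercive ⊢
    exact integral_truncPowDeriv_mul_divergence_add_dissipation_le hp hε hc state.nonneg
      state.mass_eq coercive hk hkl hχ
  have evolution := add_integral_le_of_le_mul hT₁₂
    (fun τ hτ => hf.hasDerivAt_integral_truncPow_mul_sq hp hε hχ (Ioo_subset hτ)) fixed_time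
    (fun τ hτ => hf.integral_truncPow_mul_sq_le hp0 hε hk hkl hχ (Ioo_subset hτ))
    (by positivity) (by positivity) (energyGrowthConst_nonneg hp hχ.bound_nonneg hk.le hkl)
    (fun τ => integral_nonneg fun v =>
      mul_nonneg (sq_nonneg _) (truncDissipation_nonneg hε p l (f τ) v))
    ((hf.continuousOn_integral_truncDissipation hp hε hχ).mono Ioo_subset)
    (fun τ => integral_nonneg fun v => rpow_nonneg (max_sub_zero_nonneg _ _) _)
    (hf.integrableOn_integral_max_sub_zero_rpow hT₁ hT₃ hp0 hk hA) ht
  rwa [hf.toReal_powerAbove hT₁ hT₃ hp0 hk, one_div, mul_inv_rev]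

end IsLandauSolution

/-! ### Removal of the regularisation -/

lemma lintegral_le_liminf_lintegral {α : Type*} [MeasurableSpace α] {μ : Measure α}
    {F : ℕ → α → ENNReal} {G : α → ENNReal} (hF : ∀ n, AEMeasurable (F n) μ)
    (hG : ∀ᵐ x ∂μ, G x ≤ liminf (fun n => F n x) atTop) :
    ∫⁻ x, G x ∂μ ≤ liminf (fun n => ∫⁻ x, F n x ∂μ) atTop :=
  (lintegral_mono_ae hG).trans (lintegral_liminf_le' hF)

lemma setLIntegral_Ioo_le_of_forall_mem {a b : ℝ} {g : ℝ → ENNReal} {K : ENNReal}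
    (hK : ∀ t ∈ Ioo a b, ∫⁻ τ in Ioo a t, g τ ≤ K) : ∫⁻ τ in Ioo a b, g τ ≤ K := by
  rcases le_or_gt b a with hba | hab
  · simp [Ioo_eq_empty_of_le hba]
  obtain ⟨u, u_mono, u_mem, u_tendsto⟩ := exists_seq_strictMono_tendsto' hab
  have exhaustion : Ioo a b = ⋃ n, Ioo a (u n) := by
    ext x
    simp only [mem_iUnion, mem_Ioo]
    constructor
    · rintro ⟨hax, hxb⟩
      obtain ⟨n, hn⟩ := (u_tendsto.eventually (lt_mem_nhds hxb)).exists
      exact ⟨n, hax, hn⟩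
    · rintro ⟨n, hax, hxu⟩
      exact ⟨hax, hxu.trans (u_mem n).2⟩
  rw [exhaustion, setLIntegral_iUnion_of_directed _ (Monotone.directed_le fun m n hmn =>
    Ioo_subset_Ioo_right (u_mono.monotone hmn))]
  exact iSup_le fun n => hK (u n) (u_mem n)

lemma pd_max_sub_zero_rpow_of_le {g : V3 → ℝ} {l r : ℝ} {v : V3} (hr : 0 < r) (hv : g v ≤ l)
    (i : Fin 3) : pd i (fun w => max (g w - l) 0 ^ r) v = 0 := by
  have isLocalMin : IsLocalMin (fun w => max (g w - l) 0 ^ r) v := by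
    refine Eventually.of_forall fun w => ?_
    beta_reduce
    rw [max_eq_right (sub_nonpos.2 hv), zero_rpow hr.ne']
    exact rpow_nonneg (max_sub_zero_nonneg _ _) _
  simp [pd, isLocalMin.fderiv_eq_zero]

lemma pd_max_sub_zero_rpow_of_lt {g : V3 → ℝ} {l : ℝ} {v : V3} (hg : DifferentiableAt ℝ g v)
    (hv : l < g v) (r : ℝ) (i : Fin 3) :
    pd i (fun w => max (g w - l) 0 ^ r) v = r * (g v - l) ^ (r - 1) * pd i g v := by
  have eventuallyEq : (fun w => max (g w - l) 0 ^ r) =ᶠ[𝓝 v] fun w => (g w - l) ^ r := by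
    filter_upwards [hg.continuousAt.eventually (lt_mem_nhds hv)] with w hw
    rw [max_eq_left (sub_pos.2 hw).le]
  simp [pd, eventuallyEq.fderiv_eq, ((hg.hasFDerivAt.sub_const l).rpow_const (p := r)
    (Or.inl (sub_pos.2 hv).ne')).fderiv]

section Limits

variable {ι : Type*} {L : Filter ι} {ε : ι → ℝ} (hε : Tendsto ε L (𝓝 0))
include hε

lemma tendsto_rpow_add_one_div_add {x : ℝ} (hx : 0 < x) (q : ℝ) :
    Tendsto (fun n => x ^ (q + 1) / (x + ε n)) L (𝓝 (x ^ q)) := by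
  have limit_eq : x ^ (q + 1) / (x + 0) = x ^ q := by
    rw [add_zero, rpow_add_one hx.ne', mul_div_cancel_right₀ _ hx.ne']
  exact limit_eq ▸ tendsto_const_nhds.div (hε.const_add x) (by simpa using hx.ne')

lemma tendsto_truncPow {p : ℝ} (hp : 0 < p) (l s : ℝ) :
    Tendsto (fun n => truncPow p (ε n) l s) L (𝓝 (max (s - l) 0 ^ p)) := by
  unfold truncPow
  rcases (max_sub_zero_nonneg s l).eq_or_lt with hzero | hpos
  · rw [← hzero, zero_rpow hp.ne', zero_rpow (by linarith)]
    simp [tendsto_const_nhds]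
  · exact tendsto_rpow_add_one_div_add hε hpos p

lemma tendsto_truncDissipation {p : ℝ} (hp : 1 < p) (l : ℝ) {g : V3 → ℝ} {v : V3}
    (hg : DifferentiableAt ℝ g v) :
    Tendsto (fun n => p ^ 2 / 4 * truncDissipation p (ε n) l g v) L
      (𝓝 (dissipationAbove p l g v)) := by
  unfold truncDissipation dissipationAbove
  rcases le_or_gt (g v) l with hv | hv
  · simp only [max_eq_right (sub_nonpos.2 hv), zero_rpow (sub_pos.2 hp).ne',
      pd_max_sub_zero_rpow_of_le (by linarith : 0 < p / 2) hv]
    simp [tendsto_const_nhds]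
  · have hx := sub_pos.2 hv
    have limit_eq : jap v ^ (-(3 : ℝ)) *
          ∑ i : Fin 3, (pd i (fun w => max (g w - l) 0 ^ (p / 2)) v) ^ 2 =
        p ^ 2 / 4 * ((g v - l) ^ (p - 2) * (jap v ^ (-(3 : ℝ)) * ∑ i : Fin 3, pd i g v ^ 2)) := by
      have rpow_sq : ((g v - l) ^ (p / 2 - 1)) ^ 2 = (g v - l) ^ (p - 2) := by
        rw [← rpow_mul_natCast hx.le]
        push_cast
        ring_nf
      simp_rw [pd_max_sub_zero_rpow_of_lt hg hv, mul_pow, rpow_sq, ← Finset.mul_sum]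
      ring
    rw [limit_eq, max_eq_left hx.le, show p - 1 = p - 2 + 1 by ring]
    exact ((tendsto_rpow_add_one_div_add hε hx (p - 2)).mul_const _).const_mul _

end Limits

section Fatou

variable {p l : ℝ} {ε δ : ℕ → ℝ} {χ : ℕ → V3 → ℝ} (hε : ∀ n, 0 < ε n)
  (hε0 : Tendsto ε atTop (𝓝 0)) (hχ : ∀ n, IsCutoff (δ n) (χ n))
  (hχ1 : ∀ v, ∀ᶠ n in atTop, χ n v = 1)
include hε hε0 hχ hχ1

lemma lintegral_max_sub_zero_rpow_le_of_integral_truncPow_le (hp : 0 < p) {g : V3 → ℝ}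
    (hg : Continuous g) {K : ℝ}
    (hK : ∀ᶠ n in atTop, ∫ v, truncPow p (ε n) l (g v) * χ n v ^ 2 ≤ K) :
    ∫⁻ v, ENNReal.ofReal (max (g v - l) 0 ^ p) ≤ ENNReal.ofReal K := by
  have continuous_integrand (n : ℕ) : Continuous fun v => truncPow p (ε n) l (g v) * χ n v ^ 2 :=
    ((continuous_iff_continuousAt.2 fun s =>
      (hasDerivAt_truncPow hp (hε n) l s).continuousAt).comp hg).mul
        ((hχ n).contDiff.continuous.pow 2)
  have tendsto_integrand (v : V3) : Tendsto (fun n => truncPow p (ε n) l (g v) * χ n v ^ 2) atTop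
      (𝓝 (max (g v - l) 0 ^ p)) := by
    refine (tendsto_truncPow hε0 hp l (g v)).congr' ?_
    filter_upwards [hχ1 v] with n hn
    rw [hn, one_pow, mul_one]
  refine (lintegral_le_liminf_lintegral
    (fun n => (continuous_integrand n).measurable.ennreal_ofReal.aemeasurable)
    (ae_of_all _ fun v => (ENNReal.tendsto_ofReal (tendsto_integrand v)).liminf_eq.ge)).trans
    (liminf_le_of_frequently_le' (hK.mono fun n hn => ?_).frequently)
  rw [← ofReal_integral_eq_lintegral_ofReal
    ((continuous_integrand n).integrable_of_hasCompactSupport (hχ n).hasCompactSupport_sq.mul_left)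
    (ae_of_all _ fun v => mul_nonneg (truncPow_nonneg (hε n) l _) (sq_nonneg _))]
  exact ENNReal.ofReal_le_ofReal hn

lemma lintegral_dissipationAbove_le_liminf (hp : 1 < p) {g : V3 → ℝ} (hg : ContDiff ℝ 1 g) :
    ∫⁻ v, ENNReal.ofReal (dissipationAbove p l g v) ≤ liminf (fun n => ENNReal.ofReal
      (p ^ 2 / 4 * ∫ v, χ n v ^ 2 * truncDissipation p (ε n) l g v)) atTop := by
  have integrable_integrand (n : ℕ) :
      Integrable fun v => p ^ 2 / 4 * (χ n v ^ 2 * truncDissipation p (ε n) l g v) :=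
    ((((hχ n).contDiff.continuous.pow 2).mul
      (continuous_truncDissipation hp (hε n) l hg)).integrable_of_hasCompactSupport
        (hχ n).hasCompactSupport_sq.mul_right).const_mul _
  have tendsto_integrand (v : V3) :
      Tendsto (fun n => p ^ 2 / 4 * (χ n v ^ 2 * truncDissipation p (ε n) l g v)) atTop
        (𝓝 (dissipationAbove p l g v)) := by
    refine (tendsto_truncDissipation hε0 hp l (hg.differentiable one_ne_zero v)).congr' ?_
    filter_upwards [hχ1 v] with n hn
    rw [hn, one_pow, one_mul]
  have ofReal_integral (n : ℕ) : ENNReal.ofReal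
        (p ^ 2 / 4 * ∫ v, χ n v ^ 2 * truncDissipation p (ε n) l g v) =
      ∫⁻ v, ENNReal.ofReal (p ^ 2 / 4 * (χ n v ^ 2 * truncDissipation p (ε n) l g v)) := by
    rw [← integral_const_mul, ofReal_integral_eq_lintegral_ofReal (integrable_integrand n)
      (ae_of_all _ fun v => mul_nonneg (by positivity)
        (mul_nonneg (sq_nonneg _) (truncDissipation_nonneg (hε n) p l g v)))]
  simp_rw [ofReal_integral]
  exact lintegral_le_liminf_lintegral
    (fun n => (integrable_integrand n).aemeasurable.ennreal_ofReal)
    (ae_of_all _ fun v => (ENNReal.tendsto_ofReal (tendsto_integrand v)).liminf_eq.ge)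

namespace IsLandauSolution

variable {M T : ℝ} {f : ℝ → V3 → ℝ} (hf : IsLandauSolution M T f) {c K T₂ T₃ : ℝ} (hc : 0 < c)
  (hT₂ : 0 < T₂)
include hf hc hT₂

lemma lintegral_dissipationAbove_le_of_integral_le {t : ℝ} (hp : 1 < p) (hT₂t : T₂ ≤ t)
    (ht : t < T) (hK : ∀ᶠ n in atTop,
      c * ∫ τ in T₂..t, ∫ v, χ n v ^ 2 * truncDissipation p (ε n) l (f τ) v ≤ K) :
    ∫⁻ τ in Ioo T₂ t, ∫⁻ v, ENNReal.ofReal (dissipationAbove p l (f τ) v) ≤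
      ENNReal.ofReal (p ^ 2 / (4 * c) * K) := by
  have Icc_subset : Icc T₂ t ⊆ Ioo 0 T := fun τ hτ => ⟨hT₂.trans_le hτ.1, hτ.2.trans_lt ht⟩
  have integrableOn (n : ℕ) : IntegrableOn
      (fun τ => p ^ 2 / 4 * ∫ v, χ n v ^ 2 * truncDissipation p (ε n) l (f τ) v) (Ioo T₂ t) :=
    ((((hf.continuousOn_integral_truncDissipation hp (hε n) (hχ n)).mono
      Icc_subset).integrableOn_Icc).mono_set Ioo_subset_Icc_self).const_mul _
  have slice_le : ∀ᵐ τ ∂volume.restrict (Ioo T₂ t),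
      ∫⁻ v, ENNReal.ofReal (dissipationAbove p l (f τ) v) ≤ liminf (fun n => ENNReal.ofReal
        (p ^ 2 / 4 * ∫ v, χ n v ^ 2 * truncDissipation p (ε n) l (f τ) v)) atTop := by
    filter_upwards [ae_restrict_mem measurableSet_Ioo] with τ hτ
    exact lintegral_dissipationAbove_le_liminf hε hε0 hχ hχ1 hp
      (hf.contDiff (Icc_subset (Ioo_subset_Icc_self hτ)))
  refine (lintegral_le_liminf_lintegral (fun n => (integrableOn n).aemeasurable.ennreal_ofReal)
    slice_le).trans (liminf_le_of_frequently_le' (hK.mono fun n hn => ?_).frequently)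
  rw [← ofReal_integral_eq_lintegral_ofReal (integrableOn n) (ae_of_all _ fun τ => mul_nonneg
    (by positivity) (integral_nonneg fun v =>
      mul_nonneg (sq_nonneg _) (truncDissipation_nonneg (hε n) p l (f τ) v))),
    integral_const_mul, ← integral_Ioc_eq_integral_Ioo, ← intervalIntegral.integral_of_le hT₂t]
  refine ENNReal.ofReal_le_ofReal ?_
  calc _ ≤ p ^ 2 / 4 * (K / c) := by gcongr; rwa [le_div_iff₀' hc]
    _ = p ^ 2 / (4 * c) * K := by field_simp

lemma energyAbove_le_of_integral_add_integral_le (hp : 1 < p) (hT₃ : T₃ ≤ T)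
    (hK : ∀ᶠ n in atTop, ∀ t ∈ Ioo T₂ T₃, (∫ v, truncPow p (ε n) l (f t v) * χ n v ^ 2) +
      c * ∫ τ in T₂..t, ∫ v, χ n v ^ 2 * truncDissipation p (ε n) l (f τ) v ≤ K) :
    energyAbove p l f T₂ T₃ ≤ ENNReal.ofReal K + ENNReal.ofReal (p ^ 2 / (4 * c) * K) := by
  refine add_le_add (iSup₂_le fun t ht => ?_) (setLIntegral_Ioo_le_of_forall_mem fun t ht => ?_)
  · have dissipation_nonneg (n : ℕ) :
        0 ≤ ∫ τ in T₂..t, ∫ v, χ n v ^ 2 * truncDissipation p (ε n) l (f τ) v :=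
      intervalIntegral.integral_nonneg ht.1.le fun τ _ => integral_nonneg fun v =>
        mul_nonneg (sq_nonneg _) (truncDissipation_nonneg (hε n) p l (f τ) v)
    refine lintegral_max_sub_zero_rpow_le_of_integral_truncPow_le hε hε0 hχ hχ1
      (zero_lt_one.trans hp) (hf.contDiff ⟨hT₂.trans ht.1, ht.2.trans_le hT₃⟩).continuous
      (hK.mono fun n hn => ?_)
    exact (le_add_of_nonneg_right (mul_nonneg hc.le (dissipation_nonneg n))).trans (hn t ht)
  · refine hf.lintegral_dissipationAbove_le_of_integral_le hε hε0 hχ hχ1 hc hT₂ hp ht.1.le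
      (ht.2.trans_le hT₃) (hK.mono fun n hn => ?_)
    exact (le_add_of_nonneg_left (integral_nonneg fun v =>
      mul_nonneg (truncPow_nonneg (hε n) l _) (sq_nonneg _))).trans (hn t ht)

end IsLandauSolution

end Fatou

lemma eventually_energyGrowthConst_div_le {p k l : ℝ} (hp : 1 < p) (hk : 0 ≤ k) (hkl : k < l)
    (d : ℝ) : ∀ᶠ n : ℕ in atTop, energyGrowthConst p (d / (n + 1)) k l ≤
      (2 * p + 3) * (1 + l / (l - k) + l ^ 2 / (l - k) ^ 2) := by
  have bound_tendsto : Tendsto (fun n : ℕ => d / (n + 1)) atTop (𝓝 0) := by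
    simpa [div_eq_mul_inv] using tendsto_one_div_add_atTop_nhds_zero_nat.const_mul d
  have cutoff_continuous : Continuous fun d => cutoffConst p d * coeffBoundConst k l := by
    unfold cutoffConst
    fun_prop
  have cutoff_tendsto : Tendsto (fun n : ℕ => cutoffConst p (d / (n + 1)) * coeffBoundConst k l)
      atTop (𝓝 0) := by
    simpa [cutoffConst, Function.comp_def] using
      (cutoff_continuous.tendsto 0).comp bound_tendsto
  filter_upwards [cutoff_tendsto.eventually (gt_mem_nhds one_pos)] with n hn
  have : 0 ≤ l / (l - k) := div_nonneg (hk.trans hkl.le) (sub_pos.2 hkl).le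
  have : 0 ≤ l ^ 2 / (l - k) ^ 2 := by positivity
  unfold energyGrowthConst
  nlinarith

/-- The factor multiplying `𝓐_k(T₁, T₃)` in the estimate, with `s = T₂ - T₁`. -/
def levelFactor (s k l : ℝ) : ℝ :=
  1 / (s * (l - k)) + 1 + l / (l - k) + l ^ 2 / (l - k) ^ 2

lemma levelFactor_pos {s k l : ℝ} (hs : 0 ≤ s) (hk : 0 ≤ k) (hkl : k < l) :
    0 < levelFactor s k l := by
  have := sub_pos.2 hkl
  have := hk.trans hkl.le
  unfold levelFactor
  positivity

namespace IsLandauSolution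

variable {M T : ℝ} {f : ℝ → V3 → ℝ} (hf : IsLandauSolution M T f) {p k l c T₁ T₂ T₃ : ℝ}
include hf

lemma energyAbove_le_of_coercive (hp : 1 < p) (hc : 0 < c)
    (hcoer : ∀ t ∈ Ioo 0 T, ∀ v ξ : V3,
      c * jap v ^ (-(3 : ℝ)) * ‖ξ‖ ^ 2 ≤ ∑ i, ∑ j, coeffA (f t) v i j * ξ i * ξ j)
    (hT₁ : 0 ≤ T₁) (hT₁₂ : T₁ < T₂) (hT₃ : T₃ ≤ T) (hk : 0 < k) (hkl : k < l)
    (hA : powerAbove p k f T₁ T₃ ≠ ⊤) :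
    energyAbove p l f T₂ T₃ ≤ ENNReal.ofReal
      ((1 + p ^ 2 / (4 * (c / 2 * (p * (p - 1))))) * ((2 * p + 3) * levelFactor (T₂ - T₁) k l)) *
        powerAbove p k f T₁ T₃ := by
  obtain ⟨d, hd⟩ := exists_isCutoff
  choose χ hχ hχ1 using hd
  have := sub_pos.2 hp
  have hc₀ : 0 < c / 2 * (p * (p - 1)) := by positivity
  have := levelFactor_pos (sub_pos.2 hT₁₂).le hk.le hkl
  set K := (2 * p + 3) * levelFactor (T₂ - T₁) k l * (powerAbove p k f T₁ T₃).toReal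
  have energy_le : ∀ᶠ n : ℕ in atTop, ∀ t ∈ Ioo T₂ T₃,
      (∫ v, truncPow p (1 / (n + 1)) l (f t v) * χ n v ^ 2) + c / 2 * (p * (p - 1)) *
        ∫ τ in T₂..t, ∫ v, χ n v ^ 2 * truncDissipation p (1 / (n + 1)) l (f τ) v ≤ K := by
    filter_upwards [eventually_energyGrowthConst_div_le hp hk.le hkl d] with n hn t ht
    refine (hf.integral_truncPow_add_integral_dissipation_le hT₁ hT₃ hp (by positivity) hc.le hcoer
      hk hkl (hχ n) hT₁₂ hA ht).trans (mul_le_mul_of_nonneg_right ?_ ENNReal.toReal_nonneg)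
    have : 0 ≤ 1 / ((T₂ - T₁) * (l - k)) :=
      one_div_nonneg.2 (mul_pos (sub_pos.2 hT₁₂) (sub_pos.2 hkl)).le
    unfold levelFactor
    nlinarith
  have χ_eventually_one (v : V3) : ∀ᶠ n in atTop, χ n v = 1 := by
    filter_upwards [eventually_ge_atTop ⌈‖v‖⌉₊] with n hn
    exact hχ1 n v ((Nat.ceil_le.1 hn).trans (lt_add_one _).le)
  calc energyAbove p l f T₂ T₃
      ≤ ENNReal.ofReal K + ENNReal.ofReal (p ^ 2 / (4 * (c / 2 * (p * (p - 1)))) * K) :=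
        hf.energyAbove_le_of_integral_add_integral_le (fun n => by positivity)
          tendsto_one_div_add_atTop_nhds_zero_nat hχ χ_eventually_one hc₀
          (hT₁.trans_lt hT₁₂) hp hT₃ energy_le
    _ = _ := by
        rw [← ENNReal.ofReal_add (by positivity) (by positivity), ← one_add_mul, ← mul_assoc,
          ENNReal.ofReal_mul (by positivity), ENNReal.ofReal_toReal hA]

end IsLandauSolution

lemma isLandauSolution_of_isNormalized {M T : ℝ} {f : ℝ → V3 → ℝ}
    (nonneg : ∀ t ∈ Icc 0 T, ∀ v, 0 ≤ f t v)
    (smooth : ContDiffOn ℝ 1 (Function.uncurry f) (Icc 0 T ×ˢ univ))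
    (schwartz : ∀ t ∈ Icc 0 T, IsSchwartz (f t)) (landau : ∀ t ∈ Ioo 0 T, ∀ v, LandauEqAt f t v)
    (normalized : ∀ t ∈ Icc 0 T, IsNormalized (f t))
    (entropy : ∀ t ∈ Icc 0 T, ∫ v, f t v * log (f t v) ≤ M) : IsLandauSolution M T f where
  contDiffOn := smooth.mono (prod_mono Ioo_subset_Icc_self le_rfl)
  isSchwartz t ht := schwartz t (Ioo_subset_Icc_self ht)
  landauEqAt := landau
  isLandauState t ht :=
    have ht' := Ioo_subset_Icc_self ht
    ⟨nonneg t ht', (normalized t ht').1, (normalized t ht').2.2.le, entropy t ht'⟩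

theorem A_controls_energy_general (p M : ℝ) (hp : 1 < p) : ∃ C : ℝ, 0 < C ∧
    ∀ T : ℝ, ∀ f : ℝ → V3 → ℝ, IsLandauSolution M T f →
    ∀ T₁ T₂ T₃ : ℝ, 0 ≤ T₁ → T₁ < T₂ → T₃ ≤ T → ∀ k l : ℝ, 0 < k → k < l →
      energyAbove p l f T₂ T₃ ≤
        ENNReal.ofReal (C * levelFactor (T₂ - T₁) k l) * powerAbove p k f T₁ T₃ := by
  obtain ⟨c, hc, coercive⟩ := exists_coeffA_coercive M
  have := sub_pos.2 hp
  refine ⟨(1 + p ^ 2 / (4 * (c / 2 * (p * (p - 1))))) * (2 * p + 3), by positivity,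
    fun T f hf T₁ T₂ T₃ hT₁ hT₁₂ hT₃ k l hk hkl => ?_⟩
  have hcoer (t : ℝ) (ht : t ∈ Ioo 0 T) (v ξ : V3) :
      c * jap v ^ (-(3 : ℝ)) * ‖ξ‖ ^ 2 ≤ ∑ i, ∑ j, coeffA (f t) v i j * ξ i * ξ j := by
    have state := hf.isLandauState t ht
    obtain ⟨h, hh⟩ := hf.isSchwartz t ht
    rw [← hh] at state ⊢
    exact coercive h state v ξ
  by_cases hA : powerAbove p k f T₁ T₃ = ⊤
  · have := levelFactor_pos (sub_pos.2 hT₁₂).le hk.le hkl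
    rw [hA, ENNReal.mul_top (ENNReal.ofReal_pos.2 (by positivity)).ne']
    exact le_top
  · rw [mul_assoc]
    exact hf.energyAbove_le_of_coercive hp hc hcoer hT₁ hT₁₂ hT₃ hk hkl hA

/-- control of 𝓔_ℓ by 𝓐_k for smooth solutions (inequality `eq:energy2`). -/
theorem A_controls_energy (p M : ℝ) (hp : 3 / 2 < p) (hM : 0 < M) :
    ∃ C : ℝ, 0 < C ∧
      ∀ T : ℝ, 0 < T → T ≤ 1 →
      ∀ f : ℝ → V3 → ℝ,
        (∀ t v, 0 ≤ f t v) →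
        ContDiffOn ℝ (⊤ : ℕ∞) (fun q : ℝ × V3 => f q.1 q.2)
          (Set.Icc 0 T ×ˢ (Set.univ : Set V3)) →
        (∀ t ∈ Set.Icc (0 : ℝ) T, IsSchwartz (f t)) →
        (∀ t ∈ Set.Ioo (0 : ℝ) T, ∀ v, LandauEqAt f t v) →
        (∀ t ∈ Set.Icc (0 : ℝ) T, IsNormalized (f t)) →
        (∀ t ∈ Set.Icc (0 : ℝ) T,
          (∫ v : V3, f t v * Real.log (f t v)) ≤ M) →
        ∀ T₁ T₂ T₃ : ℝ, 0 ≤ T₁ → T₁ < T₂ → T₂ ≤ T₃ → T₃ ≤ T →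
        ∀ k l : ℝ, 0 < k → k < l →
          (⨆ t ∈ Set.Ioo T₂ T₃,
              ∫⁻ v : V3, ENNReal.ofReal (max (f t v - l) 0 ^ p)) +
            (∫⁻ t in Set.Ioo T₂ T₃, ∫⁻ v : V3, ENNReal.ofReal
              (jap v ^ (-(3 : ℝ)) * ∑ i : Fin 3,
                (pd i (fun w => max (f t w - l) 0 ^ (p / 2)) v) ^ 2)) ≤
          ENNReal.ofReal (C * (1 / ((T₂ - T₁) * (l - k)) + 1 + l / (l - k) +
              l ^ 2 / (l - k) ^ 2)) *
            (∫⁻ t in Set.Ioo T₁ T₃, ∫⁻ v : V3,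
              ENNReal.ofReal (max (f t v - k) 0 ^ (p + 1))) := by
  obtain ⟨C, hC, energy_le⟩ := A_controls_energy_general p M (by linarith)
  exact ⟨C, hC, fun T _ _ f nonneg smooth schwartz landau normalized entropy T₁ T₂ T₃ hT₁ hT₁₂ _ =>
    energy_le T f (isLandauSolution_of_isNormalized (fun t _ => nonneg t)
      (smooth.of_le (mod_cast le_top)) schwartz landau normalized entropy) T₁ T₂ T₃ hT₁ hT₁₂⟩

end
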